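/- arXiv:1812.03255 — 8 statements merged into one kernel-verified Lean document; each statement's English description precedes it below -/
import Mathlib

section
/- Let R be an associative unital ring (not necessarily commutative) that is finitely generated as a module over its center. If P is a finitely generated projective left R-module such that P ⊕ R^n is isomorphic to R^n as left R-modules for some n ≥ 0, then P = 0. -/
/-- Let `R` be an associative unital ring (not necessarily commutative)
that is finitely generated as a module over its center.  If `P` is a finitely generated
projective left `R`-module such that `P ⊕ Rⁿ` is isomorphic to `Rⁿ` as left `R`-modules
for some `n ≥ 0`, then `P = 0`. -/
theorem projective_eq_zero_of_sum_free_equiv_free_of_finite_over_center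
    (R : Type*) [Ring R]
    (hR : Module.Finite (Subring.center R) R)
    (P : Type*) [AddCommGroup P] [Module R P]
    (hPfg : Module.Finite R P) (hPproj : Module.Projective R P)
    (n : ℕ) (e : (P × (Fin n → R)) ≃ₗ[R] (Fin n → R)) :
    Subsingleton P := by
  let f : (Fin n → R) →ₗ[Subring.center R] (Fin n → R) :=
    (LinearMap.snd R P (Fin n → R) ∘ₗ e.symm.toLinearMap).restrictScalars (Subring.center R)
  have hf : Function.Surjective f := Prod.snd_surjective.comp e.symm.surjective
  -- A surjective endomorphism of a finite module over a commutative ring is injective.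
  have hinj : Function.Injective f := OrzechProperty.injective_of_surjective_endomorphism f hf
  refine ⟨fun p q ↦ ?_⟩
  have h : e (p, 0) = e (q, 0) := hinj (by simp [f])
  exact congrArg Prod.fst (e.injective h)
end

section
/- Let R be an associative unital ring (not necessarily commutative) that is finitely generated as a module over its center. Then R is stably finite: for every n ≥ 1 and all n×n matrices A, B with entries in R, if A·B = 1 (the identity matrix) then B·A = 1. -/
/-- Let `R` be an associative unital ring (not necessarily commutative)
that is finitely generated as a module over its center.  Then `R` is stably finite:
for every `n ≥ 1` and all `n × n` matrices `A, B` with entries in `R`, if `A * B = 1`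
(the identity matrix) then `B * A = 1`. -/
theorem stablyFinite_of_finite_over_center
    (R : Type*) [Ring R]
    (hR : Module.Finite (Subring.center R) R)
    (n : ℕ) (hn : 1 ≤ n)
    (A B : Matrix (Fin n) (Fin n) R) (hAB : A * B = 1) :
    B * A = 1 := by
  have : Module.Finite (Subring.center R) (Matrix (Fin n) (Fin n) R) :=
    inferInstanceAs (Module.Finite (Subring.center R) (Fin n → Fin n → R))
  let L := LinearMap.mulLeft (Subring.center R) A
  have hsurj : Function.Surjective L := fun C => ⟨B * C, by
    rw [LinearMap.mulLeft_apply, ← mul_assoc, hAB, one_mul]⟩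
  refine OrzechProperty.injective_of_surjective_endomorphism L hsurj ?_
  rw [LinearMap.mulLeft_apply, LinearMap.mulLeft_apply, ← mul_assoc, hAB, one_mul, mul_one]
end

section
/- Let R be a unital ring and e ∈ R an idempotent (e² = e). Let P be a finitely generated projective left R-module such that the R-submodule of P generated by the set e·P = {e·p : p ∈ P} is all of P (equivalently, (ReR)·P = P, where ReR is the two-sided ideal generated by e). Then there exist an integer N ≥ 0 and a left R-module Q such that P ⊕ Q is isomorphic to (Re)^N as left R-modules; that is, P is isomorphic to a direct summand of a finite direct sum of copies of the left ideal Re. -/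
/-- A surjection with a linear section splits: the target times the kernel is the source. -/
theorem LinearMap.nonempty_prod_ker_equiv_of_rightInverse {R M P : Type*} [Ring R]
    [AddCommGroup M] [Module R M] [AddCommGroup P] [Module R P]
    (f : M →ₗ[R] P) (g : P →ₗ[R] M) (hfg : f ∘ₗ g = LinearMap.id) :
    Nonempty ((P × LinearMap.ker f) ≃ₗ[R] M) := by
  have hfg' (p : P) : f (g p) = p := LinearMap.congr_fun hfg p
  refine ⟨LinearEquiv.ofBijective (g.coprod (LinearMap.ker f).subtype) ⟨?_, fun x => ?_⟩⟩
  · rw [injective_iff_map_eq_zero]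
    rintro ⟨p, k, hk⟩ h
    replace h : g p + k = 0 := by simpa using h
    have hp : p = 0 := by simpa [hfg', LinearMap.mem_ker.mp hk] using congrArg f h
    subst hp
    simpa using h
  · exact ⟨(f x, ⟨x - g (f x), by simp [hfg']⟩), by simp⟩

/-- A finite module spanned by the multiples `e • p` is spanned by finitely many of them. -/
theorem Module.Finite.exists_fin_span_smul_eq_top {R P : Type*} [Ring R] [AddCommGroup P]
    [Module R P] [Module.Finite R P] (e : R)
    (hP : Submodule.span R (Set.range fun p : P => e • p) = ⊤) :
    ∃ (N : ℕ) (v : Fin N → P), Submodule.span R (Set.range fun i => e • v i) = ⊤ := by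
  obtain ⟨s, hs, hspan⟩ := (Submodule.fg_span_iff_fg_span_finset_subset (R := R)
    (Set.range fun p : P => e • p)).mp (hP ▸ Module.Finite.fg_top)
  choose v hv using fun x : s => hs x.2
  refine ⟨s.card, v ∘ s.equivFin.symm, ?_⟩
  have hrange : (Set.range fun i => e • (v ∘ s.equivFin.symm) i) = (s : Set P) := by
    have hcomp : (fun i => e • (v ∘ s.equivFin.symm) i) = Subtype.val ∘ s.equivFin.symm :=
      funext fun i => hv (s.equivFin.symm i)
    rw [hcomp, s.equivFin.symm.surjective.range_comp]
    exact Subtype.range_coe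
  rw [hrange, ← hspan, hP]

/-- Let `R` be a unital ring and `e ∈ R` an idempotent.  Let `P` be a
finitely generated projective left `R`-module such that the `R`-submodule of `P`
generated by the set `{e • p : p ∈ P}` is all of `P`.  Then there exist `N ≥ 0` and a
left `R`-module `Q` such that `P ⊕ Q ≅ (Re)^N` as left `R`-modules; that is, `P` is
isomorphic to a direct summand of a finite direct sum of copies of the left ideal `Re`
(here realized as `Submodule.span R {e}`, with the complement `Q` realized as a
submodule of `(Re)^N`). -/
theorem summand_of_copies_of_Re
    (R : Type*) [Ring R] (e : R) (he : e * e = e)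
    (P : Type*) [AddCommGroup P] [Module R P]
    (hPfg : Module.Finite R P) (hPproj : Module.Projective R P)
    (hP : Submodule.span R (Set.range fun p : P => e • p) = ⊤) :
    ∃ (N : ℕ) (Q : Submodule R (Fin N → ↥(Submodule.span R ({e} : Set R)))),
      Nonempty ((P × ↥Q) ≃ₗ[R] (Fin N → ↥(Submodule.span R ({e} : Set R)))) := by
  obtain ⟨N, v, hv⟩ := Module.Finite.exists_fin_span_smul_eq_top e hP
  let f : (Fin N → Submodule.span R ({e} : Set R)) →ₗ[R] P :=
    LinearMap.lsum R (fun _ => Submodule.span R ({e} : Set R)) ℕ fun i =>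
      (LinearMap.toSpanSingleton R P (v i)) ∘ₗ (Submodule.span R ({e} : Set R)).subtype
  have hf : LinearMap.range f = ⊤ := by
    rw [eq_top_iff, ← hv, Submodule.span_le]
    rintro _ ⟨i, rfl⟩
    exact ⟨Pi.single i ⟨e, Submodule.mem_span_singleton_self e⟩,
      LinearMap.lsum_piSingle (S := ℕ) (i := i) ..⟩
  obtain ⟨g, hg⟩ := f.exists_rightInverse_of_surjective hf
  exact ⟨N, LinearMap.ker f, f.nonempty_prod_ker_equiv_of_rightInverse g hg⟩
end

section
/- Let 𝕜 be a field of characteristic zero, V a finite-dimensional 𝕜-vector space, and let X₁, X₂, S be 𝕜-linear endomorphisms of V satisfying X₁∘X₂ = X₂∘X₁, S∘S = id_V, and S∘X₁ = X₂∘S − id_V. Then for every eigenvalue μ ∈ 𝕜 of X₂ there exists an eigenvalue λ ∈ 𝕜 of X₁ such that μ ∈ {λ − 1, λ, λ + 1}. -/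
/-- If `w` is a `μ`-eigenvector of `X₂`, then `X₁` acts by `μ` on the image of `w` under the
intertwiner `S (X₁ - X₂) + 1`. -/
theorem apply_intertwiner_of_apply_eq_smul {𝕜 V : Type*} [Field 𝕜] [AddCommGroup V] [Module 𝕜 V]
    {X₁ X₂ S : Module.End 𝕜 V} (hcomm : X₁ * X₂ = X₂ * X₁) (hS : S * S = 1)
    (hrel : S * X₁ = X₂ * S - 1) {μ : 𝕜} {w : V} (hw : X₂ w = μ • w) :
    X₁ (S (X₁ w - μ • w) + w) = μ • (S (X₁ w - μ • w) + w) := by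
  have hX₁S : ∀ x, X₁ (S x) = S (X₂ x) - x := fun x => by
    have hSS : ∀ y, S (S y) = y := fun y => LinearMap.congr_fun hS y
    have h : S (X₁ (S x)) = X₂ (S (S x)) - S x := LinearMap.congr_fun hrel (S x)
    rw [hSS] at h
    rw [← hSS (X₁ (S x)), h, map_sub, hSS]
  have hX₂ : X₂ (X₁ w) = μ • X₁ w := by
    have h : X₁ (X₂ w) = X₂ (X₁ w) := LinearMap.congr_fun hcomm w
    rw [← h, hw, map_smul]
  rw [map_add, hX₁S]
  simp only [map_sub, map_smul, hX₂, hw]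
  module

/-- Let `𝕜` be a field of characteristic zero, `V` a finite-dimensional
`𝕜`-vector space, and `X₁, X₂, S` `𝕜`-linear endomorphisms of `V` satisfying
`X₁∘X₂ = X₂∘X₁`, `S∘S = id`, and `S∘X₁ = X₂∘S − id`.  Then for every eigenvalue `μ` of
`X₂` there exists an eigenvalue `lam` of `X₁` such that `μ ∈ {lam − 1, lam, lam + 1}`. -/
theorem eigenvalue_of_dAHA_module
    (𝕜 : Type*) [Field 𝕜] [CharZero 𝕜]
    (V : Type*) [AddCommGroup V] [Module 𝕜 V] [FiniteDimensional 𝕜 V]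
    (X₁ X₂ S : Module.End 𝕜 V)
    (hcomm : X₁ * X₂ = X₂ * X₁)
    (hS : S * S = 1)
    (hrel : S * X₁ = X₂ * S - 1)
    (μ : 𝕜) (hμ : Module.End.HasEigenvalue X₂ μ) :
    ∃ lam : 𝕜, Module.End.HasEigenvalue X₁ lam ∧
      (μ = lam - 1 ∨ μ = lam ∨ μ = lam + 1) := by
  obtain ⟨v, hv⟩ := hμ.exists_hasEigenvector
  have hX₂v : X₂ v = μ • v := hv.apply_eq_smul
  have eigenvalue_of_ne {c : 𝕜} {x : V} (h : X₁ x = c • x) (hx : x ≠ 0) :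
      Module.End.HasEigenvalue X₁ c :=
    Module.End.hasEigenvalue_of_hasEigenvector
      ⟨Module.End.mem_eigenspace_iff.mpr h, hx⟩
  obtain ⟨u, hu⟩ : ∃ u, u = X₁ v - μ • v := ⟨_, rfl⟩
  have hX₁v : X₁ v = μ • v + u := by rw [hu]; abel
  have hX₂u : X₂ u = μ • u := by
    have h : X₁ (X₂ v) = X₂ (X₁ v) := LinearMap.congr_fun hcomm v
    rw [hu, map_sub, ← h, map_smul, hX₂v, map_smul, smul_sub]
  by_cases hΦv : S (X₁ v - μ • v) + v = 0
  swap
  · exact ⟨μ, eigenvalue_of_ne (apply_intertwiner_of_apply_eq_smul hcomm hS hrel hX₂v) hΦv,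
      .inr (.inl rfl)⟩
  by_cases hΦu : S (X₁ u - μ • u) + u = 0
  swap
  · exact ⟨μ, eigenvalue_of_ne (apply_intertwiner_of_apply_eq_smul hcomm hS hrel hX₂u) hΦu,
      .inr (.inl rfl)⟩
  -- Both intertwiner images vanish, so `(X₁ - μ)² v = v`.
  have hX₁u : X₁ u = μ • u + v := by
    have hSS : ∀ y, S (S y) = y := fun y => LinearMap.congr_fun hS y
    rw [← hu] at hΦv
    have h : S (X₁ u - μ • u) = S v := by
      rw [eq_neg_of_add_eq_zero_left hΦu, eq_neg_of_add_eq_zero_right hΦv, map_neg, hSS]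
    have h' := congrArg S h
    rw [hSS, hSS] at h'
    rw [← h']; abel
  by_cases huv : u + v = 0
  · refine ⟨μ - 1, eigenvalue_of_ne ?_ hv.2, .inr (.inr (by ring))⟩
    rw [hX₁v, eq_neg_of_add_eq_zero_left huv]
    module
  · refine ⟨μ + 1, eigenvalue_of_ne ?_ huv, .inl (by ring)⟩
    rw [map_add, hX₁u, hX₁v]
    module
end

section
/- Let 𝕜 be an algebraically closed field of characteristic zero, V a finite-dimensional 𝕜-vector space, and n ≥ 1. Let X₁, …, Xₙ be pairwise commuting 𝕜-linear endomorphisms of V, and let S₁, …, S_{n−1} be 𝕜-linear endomorphisms of V satisfying Sᵢ∘Sᵢ = id_V and Sᵢ∘Xᵢ = X_{i+1}∘Sᵢ − id_V for each 1 ≤ i ≤ n−1. Suppose f ∈ 𝕜[w] is a monic polynomial with f(X₁) = 0. Then for every 1 ≤ j ≤ n and every eigenvalue μ ∈ 𝕜 of Xⱼ, there exist a root λ ∈ 𝕜 of f and an integer d such that μ = λ + d. -/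
/-- Two commuting endomorphisms have a common eigenvector for any prescribed eigenvalue of the
first. -/
theorem Module.End.HasEigenvalue.exists_common_hasEigenvector
    {K V : Type*} [Field K] [IsAlgClosed K] [AddCommGroup V] [Module K V] [FiniteDimensional K V]
    {A B : Module.End K V} (hAB : Commute A B) {μ : K} (hμ : A.HasEigenvalue μ) :
    ∃ (c : K) (v : V), A.HasEigenvector μ v ∧ B.HasEigenvector c v := by
  have hmaps : ∀ v ∈ A.eigenspace μ, B v ∈ A.eigenspace μ := fun v hv ↦
    Module.End.mapsTo_genEigenspace_of_comm hAB μ 1 hv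
  have : Nontrivial (A.eigenspace μ) := Submodule.nontrivial_iff_ne_bot.mpr hμ
  obtain ⟨c, hc⟩ := Module.End.exists_eigenvalue (B.restrict hmaps)
  obtain ⟨v, hv⟩ := hc.exists_hasEigenvector
  have hv0 : (v : V) ≠ 0 := fun h ↦ hv.2 (Subtype.ext h)
  refine ⟨c, v, ⟨v.2, hv0⟩, Module.End.mem_eigenspace_iff.mpr ?_, hv0⟩
  simpa using congrArg Subtype.val hv.apply_eq_smul

/-- If `S² = 1`, `S X = Y S - 1` and `X`, `Y` commute, every eigenvalue of `Y` differs from some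
eigenvalue of `X` by an integer. -/
theorem Module.End.exists_hasEigenvalue_add_int_of_degenerate_hecke_rel
    {K V : Type*} [Field K] [IsAlgClosed K] [AddCommGroup V] [Module K V] [FiniteDimensional K V]
    {X Y S : Module.End K V} (hXY : Commute Y X) (hS : S * S = 1) (hrel : S * X = Y * S - 1)
    {μ : K} (hμ : Y.HasEigenvalue μ) :
    ∃ (c : K) (d : ℤ), X.HasEigenvalue c ∧ μ = c + (d : K) := by
  obtain ⟨c, v, hY, hX⟩ := hμ.exists_common_hasEigenvector hXY
  have hXS : X * S = S * Y - 1 := by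
    calc X * S = (S * S) * X * S := by rw [hS, one_mul]
      _ = S * (S * X) * S := by simp only [mul_assoc]
      _ = S * Y * (S * S) - S * S := by rw [hrel]; noncomm_ring
      _ = S * Y - 1 := by rw [hS, mul_one]
  have hXSv : X (S v) = μ • S v - v := by
    simpa [hY.apply_eq_smul] using LinearMap.congr_fun hXS v
  by_cases hw : (μ - c) • S v - v = 0
  · have hSSv : S (S v) = v := LinearMap.congr_fun hS v
    have hSv : (μ - c) • v = S v := by
      simpa [hSSv, sub_eq_zero] using congrArg S hw
    have hsq : (μ - c) * (μ - c) = 1 := by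
      rw [← hSv, smul_smul, sub_eq_zero] at hw
      exact smul_left_injective K hX.2 (by simpa using hw)
    rcases mul_self_eq_one_iff.mp hsq with h | h
    · exact ⟨c, 1, Module.End.hasEigenvalue_of_hasEigenvector hX, by
        push_cast; linear_combination h⟩
    · exact ⟨c, -1, Module.End.hasEigenvalue_of_hasEigenvector hX, by
        push_cast; linear_combination h⟩
  · refine ⟨μ, 0, Module.End.hasEigenvalue_of_hasEigenvector
      ⟨Module.End.mem_eigenspace_iff.mpr ?_, hw⟩, by simp⟩
    rw [map_sub, map_smul, hXSv, hX.apply_eq_smul]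
    module

/-- Let `𝕜` be an algebraically closed field of characteristic zero,
`V` a finite-dimensional `𝕜`-vector space, and `n ≥ 1`.  Let `X 0, …, X (n-1)` be
pairwise commuting endomorphisms of `V` and `S 0, …, S (n-2)` endomorphisms satisfying
`Sᵢ∘Sᵢ = id` and `Sᵢ∘Xᵢ = Xᵢ₊₁∘Sᵢ − id` (0-indexed).  If `f` is a monic polynomial with
`f(X 0) = 0`, then every eigenvalue `μ` of any `X j` is of the form `lam + d` for some
root `lam` of `f` and some integer `d`. -/
theorem eigenvalues_of_cyclotomic_module_congruent_to_roots
    (𝕜 : Type*) [Field 𝕜] [IsAlgClosed 𝕜] [CharZero 𝕜]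
    (V : Type*) [AddCommGroup V] [Module 𝕜 V] [FiniteDimensional 𝕜 V]
    (n : ℕ) (hn : 1 ≤ n)
    (X : Fin n → Module.End 𝕜 V) (S : ℕ → Module.End 𝕜 V)
    (hX : ∀ i j, X i * X j = X j * X i)
    (hS : ∀ i, i + 1 < n → S i * S i = 1)
    (hrel : ∀ (i : ℕ) (hi : i + 1 < n),
      S i * X ⟨i, Nat.lt_of_succ_lt hi⟩ = X ⟨i + 1, hi⟩ * S i - 1)
    (f : Polynomial 𝕜) (hf : f.Monic)
    (hfX : Polynomial.aeval (X ⟨0, hn⟩) f = 0)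
    (j : Fin n) (μ : 𝕜) (hμ : Module.End.HasEigenvalue (X j) μ) :
    ∃ (lam : 𝕜) (d : ℤ), f.IsRoot lam ∧ μ = lam + (d : 𝕜) := by
  obtain ⟨j, hj⟩ := j
  induction j generalizing μ with
  | zero =>
    obtain ⟨v, hv⟩ := hμ.exists_hasEigenvector
    have h := Module.End.aeval_apply_of_hasEigenvector (p := f) hv
    rw [hfX, LinearMap.zero_apply] at h
    exact ⟨μ, 0, (smul_eq_zero.mp h.symm).resolve_right hv.2, by simp⟩
  | succ i ih =>
    obtain ⟨c, d, hc, rfl⟩ := Module.End.exists_hasEigenvalue_add_int_of_degenerate_hecke_rel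
      (hX _ _) (hS i hj) (hrel i hj) hμ
    obtain ⟨lam, e, hlam, rfl⟩ := ih c (Nat.lt_of_succ_lt hj) hc
    exact ⟨lam, e + d, hlam, by push_cast; ring⟩
end

section
/- The operators D₁⁺, …, D_{n−1}⁺ on K = 𝕜(x₁,…,xₙ) satisfy the Coxeter relations of the symmetric group Sₙ: Dᵢ⁺∘Dᵢ⁺ = id_K for all i; Dᵢ⁺∘Dⱼ⁺ = Dⱼ⁺∘Dᵢ⁺ whenever |i − j| ≥ 2; and Dᵢ⁺∘D_{i+1}⁺∘Dᵢ⁺ = D_{i+1}⁺∘Dᵢ⁺∘D_{i+1}⁺ for all 1 ≤ i ≤ n−2. Consequently there is a unique action of Sₙ on K by 𝕜-linear automorphisms in which the simple transposition (i, i+1) acts as Dᵢ⁺ (the '⊕-action' of Sₙ on K). -/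
noncomputable section

open MvPolynomial

/-- The `i`-th variable `xᵢ`, regarded as an element of the field `K` of rational
functions (the fraction field of `MvPolynomial (Fin n) 𝕜`). -/
def ratVar (𝕜 : Type*) [Field 𝕜] (n : ℕ) (K : Type*) [Field K]
    [Algebra (MvPolynomial (Fin n) 𝕜) K] (i : Fin n) : K :=
  algebraMap (MvPolynomial (Fin n) 𝕜) K (X i)

/-- The `𝕜`-linear operator `f ↦ s f + (f - s f) * c⁻¹`; with `s = sᵢ` and
`c = x_{i+1} - x_i` this is `Dᵢ⁺ = sᵢ + ∂ᵢ`, where `∂ᵢ f = (f - sᵢ f)/(x_{i+1} - x_i)`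
is the Demazure operator. -/
def demazurePlusAux (𝕜 : Type*) [Field 𝕜] (K : Type*) [Field K] [Algebra 𝕜 K]
    (s : K ≃ₐ[𝕜] K) (c : K) : Module.End 𝕜 K :=
  s.toLinearMap + (LinearMap.mulRight 𝕜 c⁻¹) ∘ₗ ((LinearMap.id : K →ₗ[𝕜] K) - s.toLinearMap)

/-- The operator `Dᵢ⁺ = sᵢ + ∂ᵢ` (with `0`-indexed variables, so `sᵢ` is induced by the
transposition of the variables `x i` and `x (i+1)`), built from a family `s` of
automorphisms of `K` indexed by permutations. -/
def DPlus (𝕜 : Type*) [Field 𝕜] {n : ℕ} (K : Type*) [Field K] [Algebra 𝕜 K]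
    [Algebra (MvPolynomial (Fin n) 𝕜) K]
    (s : Equiv.Perm (Fin n) → (K ≃ₐ[𝕜] K)) (i : ℕ) (hi : i + 1 < n) : Module.End 𝕜 K :=
  demazurePlusAux 𝕜 K (s (Equiv.swap ⟨i, Nat.lt_of_succ_lt hi⟩ ⟨i + 1, hi⟩))
    (ratVar 𝕜 n K ⟨i + 1, hi⟩ - ratVar 𝕜 n K ⟨i, Nat.lt_of_succ_lt hi⟩)

section CoxeterTypeA

variable {P : Type*} [Group P]

/-- The descending product `t (k + e - 1) * ⋯ * t (k + 1) * t k`. -/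
def descProd (t : ℕ → P) (k : ℕ) : ℕ → P
  | 0 => 1
  | e + 1 => t (k + e) * descProd t k e

/-- The first `N` members of `t` satisfy the Coxeter relations of type `A`. -/
structure IsCoxeterA (t : ℕ → P) (N : ℕ) : Prop where
  sq : ∀ i < N, t i * t i = 1
  comm : ∀ i j, j < N → i + 2 ≤ j → t i * t j = t j * t i
  braid : ∀ i, i + 1 < N → t i * t (i + 1) * t i = t (i + 1) * t i * t (i + 1)

variable {t : ℕ → P} {N : ℕ}

lemma descProd_succ_mul (t : ℕ → P) (k e : ℕ) :
    descProd t (k + 1) e * t k = descProd t k (e + 1) := by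
  induction e with
  | zero => simp [descProd]
  | succ e ih =>
    rw [descProd, mul_assoc, ih, add_right_comm k 1 e]
    rfl

lemma IsCoxeterA.descProd_mul_self (h : IsCoxeterA t N) {k : ℕ} (hk : k < N) (e : ℕ) :
    descProd t k (e + 1) * t k = descProd t (k + 1) e := by
  rw [← descProd_succ_mul, mul_assoc, h.sq k hk, mul_one]

lemma IsCoxeterA.descProd_mul_of_lt (h : IsCoxeterA t N) {k e j : ℕ} (hj : j + 2 ≤ k)
    (he : k + e ≤ N) : descProd t k e * t j = t j * descProd t k e := by
  induction e with
  | zero => simp [descProd]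
  | succ e ih =>
    rw [descProd, mul_assoc, ih (by omega), ← mul_assoc, ← mul_assoc,
      h.comm j (k + e) (by omega) (by omega)]

lemma IsCoxeterA.descProd_mul_of_gt (h : IsCoxeterA t N) {k e j : ℕ} (hj : k + e + 1 ≤ j)
    (hN : j < N) : descProd t k e * t j = t j * descProd t k e := by
  induction e with
  | zero => simp [descProd]
  | succ e ih =>
    rw [descProd, mul_assoc, ih (by omega), ← mul_assoc, ← mul_assoc,
      h.comm (k + e) j (by omega) (by omega)]

lemma IsCoxeterA.descProd_mul_of_mem (h : IsCoxeterA t N) {k e j : ℕ} (hk : k ≤ j)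
    (hj : j + 1 < k + e) (he : k + e ≤ N) :
    descProd t k e * t (j + 1) = t j * descProd t k e := by
  induction e with
  | zero => omega
  | succ e ih =>
    obtain hlt | heq : j + 1 < k + e ∨ j + 1 = k + e := by omega
    · rw [descProd, mul_assoc, ih hlt (by omega), ← mul_assoc, ← mul_assoc,
        h.comm j (k + e) (by omega) (by omega)]
    · obtain ⟨e, rfl⟩ : ∃ d, e = d + 1 := ⟨e - 1, by omega⟩
      obtain rfl : j = k + e := by omega
      have hb := h.braid (k + e) (by omega)
      rw [descProd, descProd, ← add_assoc, mul_assoc, mul_assoc,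
        h.descProd_mul_of_gt (by omega) (by omega)]
      simp only [← mul_assoc]
      rw [hb]

lemma IsCoxeterA.exists_eq_mul_descProd (h : IsCoxeterA t N) {m : ℕ} (hm : m < N) {g : P}
    (hg : g ∈ Subgroup.closure (t '' Set.Iio (m + 1))) :
    ∃ x ∈ Subgroup.closure (t '' Set.Iio m), ∃ k e, k + e = m + 1 ∧ g = x * descProd t k e := by
  have key : ∀ j < m + 1, ∀ g, (∃ x ∈ Subgroup.closure (t '' Set.Iio m), ∃ k e,
      k + e = m + 1 ∧ g = x * descProd t k e) →
      ∃ x ∈ Subgroup.closure (t '' Set.Iio m), ∃ k e,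
        k + e = m + 1 ∧ g * t j = x * descProd t k e := by
    rintro j hj _ ⟨x, hx, k, e, hke, rfl⟩
    have hmem : ∀ i < m, x * t i ∈ Subgroup.closure (t '' Set.Iio m) := fun i hi =>
      mul_mem hx (Subgroup.subset_closure ⟨i, hi, rfl⟩)
    obtain h1 | h1 | h1 | h1 : j + 2 ≤ k ∨ j + 1 = k ∨ j = k ∨ k < j := by omega
    · exact ⟨x * t j, hmem j (by omega), k, e, hke, by
        rw [mul_assoc, h.descProd_mul_of_lt h1 (by omega), mul_assoc]⟩
    · subst h1
      exact ⟨x, hx, j, e + 1, by omega, by rw [mul_assoc, descProd_succ_mul]⟩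
    · subst h1
      obtain ⟨e, rfl⟩ : ∃ d, e = d + 1 := ⟨e - 1, by omega⟩
      exact ⟨x, hx, j + 1, e, by omega, by rw [mul_assoc, h.descProd_mul_self (by omega)]⟩
    · obtain ⟨j, rfl⟩ : ∃ i, j = i + 1 := ⟨j - 1, by omega⟩
      exact ⟨x * t j, hmem j (by omega), k, e, hke, by
        rw [mul_assoc, h.descProd_mul_of_mem (by omega) (by omega) (by omega), mul_assoc]⟩
  induction hg using Subgroup.closure_induction_right with
  | one => exact ⟨1, one_mem _, m + 1, 0, rfl, by simp [descProd]⟩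
  | mul_right g _ y hy ih =>
    obtain ⟨j, hj, rfl⟩ := hy
    exact key j hj g ih
  | mul_inv_cancel g _ y hy ih =>
    obtain ⟨j, hj, rfl⟩ := hy
    rw [inv_eq_of_mul_eq_one_right (h.sq j (by have : j < m + 1 := hj; omega))]
    exact key j hj g ih

/-- A group generated by elements satisfying the Coxeter relations of type `A` maps
injectively to permutations as soon as the generators map to the simple transpositions. -/
lemma IsCoxeterA.eq_one_of_map_eq_one (h : IsCoxeterA t N) (π : P →* Equiv.Perm ℕ)
    (hπ : ∀ i < N, π (t i) = Equiv.swap i (i + 1)) {m : ℕ} (hm : m ≤ N) {g : P}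
    (hg : g ∈ Subgroup.closure (t '' Set.Iio m)) (hg1 : π g = 1) : g = 1 := by
  induction m generalizing g with
  | zero => simpa using hg
  | succ m ih =>
    obtain ⟨x, hx, k, e, hke, rfl⟩ := h.exists_eq_mul_descProd hm hg
    have hfix : π x (m + 1) = m + 1 := by
      have hle : Subgroup.closure (t '' Set.Iio m) ≤
          (MulAction.stabilizer (Equiv.Perm ℕ) (m + 1)).comap π := by
        rw [Subgroup.closure_le]
        rintro _ ⟨i, hi, rfl⟩
        have hi : i < m := hi
        simp only [SetLike.mem_coe, Subgroup.mem_comap, MulAction.mem_stabilizer_iff,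
          Equiv.Perm.smul_def]
        rw [hπ i (by omega), Equiv.swap_apply_of_ne_of_ne (by omega) (by omega)]
      exact hle hx
    have hcyc : ∀ d, k + d ≤ N → π (descProd t k d) k = k + d := by
      intro d hd
      induction d with
      | zero => simp [descProd]
      | succ d ih =>
        rw [descProd, map_mul, Equiv.Perm.mul_apply, ih (by omega), hπ _ (by omega),
          Equiv.swap_apply_left, add_assoc]
    have hk := congrArg (fun σ : Equiv.Perm ℕ => σ k) hg1
    simp only [map_mul, Equiv.Perm.mul_apply, Equiv.Perm.one_apply] at hk
    rw [hcyc e (by omega), hke, hfix] at hk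
    obtain rfl : e = 0 := by omega
    simp only [descProd, mul_one] at hg1 ⊢
    exact ih (by omega) hx hg1

lemma Equiv.swap_braid {α : Type*} [DecidableEq α] {a b c : α} (hab : a ≠ b) (hac : a ≠ c)
    (hbc : b ≠ c) : swap a b * swap b c * swap a b = swap b c * swap a b * swap b c := by
  rw [swap_mul_swap_mul_swap hab hac, swap_comm a b, swap_comm b c,
    swap_mul_swap_mul_swap hbc.symm hac.symm, swap_comm]

lemma Equiv.Perm.closure_simple_swaps (n : ℕ) :
    Submonoid.closure {σ : Equiv.Perm (Fin n) | ∃ (i : ℕ) (hi : i + 1 < n),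
      σ = Equiv.swap ⟨i, Nat.lt_of_succ_lt hi⟩ ⟨i + 1, hi⟩} = ⊤ := by
  cases n with
  | zero => exact Subsingleton.elim _ _
  | succ n =>
    rw [← Equiv.Perm.mclosure_swap_castSucc_succ]
    congr 1
    ext σ
    constructor
    · rintro ⟨i, hi, rfl⟩
      exact ⟨⟨i, by omega⟩, rfl⟩
    · rintro ⟨i, rfl⟩
      exact ⟨i, by omega, rfl⟩

/-- Elements of a monoid satisfying the Coxeter relations of type `A` define a unique
homomorphism from the symmetric group. -/
theorem Equiv.Perm.existsUnique_monoidHom_of_coxeter {M : Type*} [Monoid M] {n : ℕ}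
    (d : ∀ i : ℕ, i + 1 < n → M) (sq : ∀ i hi, d i hi * d i hi = 1)
    (comm : ∀ i j hi hj, i + 2 ≤ j → d i hi * d j hj = d j hj * d i hi)
    (braid : ∀ (i : ℕ) (hi : i + 2 < n), d i (Nat.lt_of_succ_lt hi) * d (i + 1) hi *
      d i (Nat.lt_of_succ_lt hi) = d (i + 1) hi * d i (Nat.lt_of_succ_lt hi) * d (i + 1) hi) :
    ∃! Φ : Equiv.Perm (Fin n) →* M, ∀ (i : ℕ) (hi : i + 1 < n),
      Φ (Equiv.swap ⟨i, Nat.lt_of_succ_lt hi⟩ ⟨i + 1, hi⟩) = d i hi := by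
  let u : ∀ i : ℕ, i + 1 < n → Mˣ := fun i hi => ⟨d i hi, d i hi, sq i hi, sq i hi⟩
  let t : ℕ → Equiv.Perm (Fin n) × Mˣ := fun i =>
    if hi : i + 1 < n then (Equiv.swap ⟨i, Nat.lt_of_succ_lt hi⟩ ⟨i + 1, hi⟩, u i hi) else 1
  have ht : ∀ i (hi : i + 1 < n),
      t i = (Equiv.swap ⟨i, Nat.lt_of_succ_lt hi⟩ ⟨i + 1, hi⟩, u i hi) := fun i hi => dif_pos hi
  have hcox : IsCoxeterA t (n - 1) := by
    refine ⟨fun i hi => ?_, fun i j hj hij => ?_, fun i hi => ?_⟩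
    · rw [ht i (by omega)]
      exact Prod.ext (Equiv.swap_mul_self _ _) (Units.ext (sq i _))
    · rw [ht i (by omega), ht j (by omega)]
      refine Prod.ext ?_ (Units.ext (comm i j _ _ hij))
      refine (Equiv.Perm.Disjoint.commute (Equiv.Perm.disjoint_swap_swap ?_)).eq
      simp
      omega
    · rw [ht i (by omega), ht (i + 1) (by omega)]
      refine Prod.ext ?_ (Units.ext (braid i _))
      change Equiv.swap _ _ * Equiv.swap _ _ * Equiv.swap _ _ =
        Equiv.swap _ _ * Equiv.swap _ _ * Equiv.swap _ _
      exact Equiv.swap_braid (by simp) (by simp [Fin.ext_iff]; omega) (by simp)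
  let π : Equiv.Perm (Fin n) × Mˣ →* Equiv.Perm ℕ :=
    (Equiv.Perm.extendDomainHom Fin.equivSubtype).comp (MonoidHom.fst _ _)
  have hπ : ∀ i < n - 1, π (t i) = Equiv.swap i (i + 1) := by
    intro i hi
    rw [ht i (by omega)]
    ext x
    change Equiv.Perm.extendDomain (Equiv.swap _ _) Fin.equivSubtype x = _
    by_cases hx : x < n
    · rw [Equiv.Perm.extendDomain_apply_subtype _ Fin.equivSubtype hx]
      simp only [Equiv.swap_apply_def, Fin.equivSubtype, Equiv.coe_fn_mk, Equiv.coe_fn_symm_mk,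
        Fin.ext_iff]
      split_ifs <;> rfl
    · rw [Equiv.Perm.extendDomain_apply_not_subtype _ Fin.equivSubtype hx,
        Equiv.swap_apply_of_ne_of_ne (by omega) (by omega)]
  let R := Subgroup.closure (t '' Set.Iio (n - 1))
  let p : R →* Equiv.Perm (Fin n) := (MonoidHom.fst _ _).comp R.subtype
  have htR : ∀ i (hi : i + 1 < n), t i ∈ R := fun i hi =>
    Subgroup.subset_closure ⟨i, by simp; omega, rfl⟩
  have hinj : Function.Injective p := by
    rw [injective_iff_map_eq_one]
    rintro ⟨g, hg⟩ hg1
    refine Subtype.ext (hcox.eq_one_of_map_eq_one π hπ le_rfl hg ?_)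
    change Equiv.Perm.extendDomainHom Fin.equivSubtype g.1 = 1
    rw [show g.1 = 1 from hg1, map_one]
  have hsurj : Function.Surjective p := by
    rw [← MonoidHom.mrange_eq_top, eq_top_iff, ← Equiv.Perm.closure_simple_swaps,
      Submonoid.closure_le]
    rintro _ ⟨i, hi, rfl⟩
    exact ⟨⟨t i, htR i hi⟩, by simp [p, ht i hi]⟩
  let E := MulEquiv.ofBijective p ⟨hinj, hsurj⟩
  let Φ : Equiv.Perm (Fin n) →* M := (Units.coeHom M).comp ((MonoidHom.snd _ _).comp
    (R.subtype.comp E.symm.toMonoidHom))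
  have hΦ : ∀ (i : ℕ) (hi : i + 1 < n),
      Φ (Equiv.swap ⟨i, Nat.lt_of_succ_lt hi⟩ ⟨i + 1, hi⟩) = d i hi := by
    intro i hi
    have hE : E.symm (Equiv.swap ⟨i, Nat.lt_of_succ_lt hi⟩ ⟨i + 1, hi⟩) = ⟨t i, htR i hi⟩ := by
      rw [MulEquiv.symm_apply_eq]
      exact (congrArg Prod.fst (ht i hi)).symm
    change ((E.symm _ : R).1.2 : M) = _
    rw [hE]
    exact congrArg (fun g : Equiv.Perm (Fin n) × Mˣ => (g.2 : M)) (ht i hi)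
  refine ⟨Φ, hΦ, fun Ψ hΨ => MonoidHom.eq_of_eqOn_denseM (Equiv.Perm.closure_simple_swaps n) ?_⟩
  rintro _ ⟨i, hi, rfl⟩
  rw [hΨ i hi, hΦ i hi]

end CoxeterTypeA

section Demazure

variable {𝕜 K : Type*} [Field 𝕜] [Field K] [Algebra 𝕜 K]

lemma demazurePlusAux_apply (s : K ≃ₐ[𝕜] K) (c f : K) :
    demazurePlusAux 𝕜 K s c f = s f + (f - s f) * c⁻¹ := rfl

lemma demazurePlusAux_mul_self {s : K ≃ₐ[𝕜] K} {a b : K} (hab : b - a ≠ 0)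
    (hs : ∀ f, s (s f) = f) (ha : s a = b) (hb : s b = a) :
    demazurePlusAux 𝕜 K s (b - a) * demazurePlusAux 𝕜 K s (b - a) = 1 := by
  ext f
  simp only [Module.End.mul_apply, Module.End.one_apply, demazurePlusAux_apply, map_add, map_sub,
    map_mul, map_inv₀, hs, ha, hb]
  generalize s f = g
  rw [← neg_sub b a, inv_neg]
  field_simp
  ring

lemma demazurePlusAux_mul_comm {s r : K ≃ₐ[𝕜] K} {c d : K} (hsr : ∀ f, s (r f) = r (s f))
    (hd : s d = d) (hc : r c = c) :
    demazurePlusAux 𝕜 K s c * demazurePlusAux 𝕜 K r d =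
      demazurePlusAux 𝕜 K r d * demazurePlusAux 𝕜 K s c := by
  ext f
  simp only [Module.End.mul_apply, demazurePlusAux_apply, map_add, map_sub, map_mul, map_inv₀,
    hsr, hd, hc]
  ring

lemma demazurePlusAux_braid {s r : K ≃ₐ[𝕜] K} {a b c : K} (hab : b - a ≠ 0) (hbc : c - b ≠ 0)
    (hac : c - a ≠ 0) (hs : ∀ f, s (s f) = f) (hr : ∀ f, r (r f) = f)
    (hsr : ∀ f, s (r (s f)) = r (s (r f)))
    (hsa : s a = b) (hsb : s b = a) (hsc : s c = c)
    (hra : r a = a) (hrb : r b = c) (hrc : r c = b) :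
    demazurePlusAux 𝕜 K s (b - a) * demazurePlusAux 𝕜 K r (c - b) *
        demazurePlusAux 𝕜 K s (b - a) =
      demazurePlusAux 𝕜 K r (c - b) * demazurePlusAux 𝕜 K s (b - a) *
        demazurePlusAux 𝕜 K r (c - b) := by
  ext f
  simp only [Module.End.mul_apply, demazurePlusAux_apply, map_add, map_sub, map_mul, map_inv₀,
    hs, hr, hsr, hsa, hsb, hsc, hra, hrb, hrc]
  generalize r (s (r f)) = f₁
  generalize r (s f) = f₂
  generalize s (r f) = f₃
  generalize r f = f₄
  generalize s f = f₅
  rw [← neg_sub b a, ← neg_sub c b, inv_neg, inv_neg]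
  field_simp
  ring

end Demazure

section RationalFunctions

variable {𝕜 : Type*} [Field 𝕜] {n : ℕ} {K : Type*} [Field K]
  [Algebra (MvPolynomial (Fin n) 𝕜) K] [IsFractionRing (MvPolynomial (Fin n) 𝕜) K]

lemma ratVar_sub_ne_zero {i j : Fin n} (h : i ≠ j) : ratVar 𝕜 n K i - ratVar 𝕜 n K j ≠ 0 :=
  sub_ne_zero.mpr fun he =>
    h (X_injective (IsFractionRing.injective (MvPolynomial (Fin n) 𝕜) K he))

variable [Algebra 𝕜 K] [IsScalarTower 𝕜 (MvPolynomial (Fin n) 𝕜) K]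

lemma algHom_ext_ratVar {φ ψ : K →ₐ[𝕜] K}
    (h : ∀ i, φ (ratVar 𝕜 n K i) = ψ (ratVar 𝕜 n K i)) : φ = ψ := by
  refine IsLocalization.algHom_ext (nonZeroDivisors (MvPolynomial (Fin n) 𝕜)) ?_
  exact MvPolynomial.algHom_ext h

lemma permAction_mul {s : Equiv.Perm (Fin n) → (K ≃ₐ[𝕜] K)}
    (hs : ∀ σ i, s σ (ratVar 𝕜 n K i) = ratVar 𝕜 n K (σ i)) (σ τ : Equiv.Perm (Fin n)) (f : K) :
    s σ (s τ f) = s (σ * τ) f := by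
  have : (s σ).toAlgHom.comp (s τ).toAlgHom = (s (σ * τ)).toAlgHom :=
    algHom_ext_ratVar (n := n) fun i => by simp [hs]
  exact DFunLike.congr_fun this f

lemma permAction_one {s : Equiv.Perm (Fin n) → (K ≃ₐ[𝕜] K)}
    (hs : ∀ σ i, s σ (ratVar 𝕜 n K i) = ratVar 𝕜 n K (σ i)) (f : K) : s 1 f = f := by
  have : (s 1).toAlgHom = AlgHom.id 𝕜 K := algHom_ext_ratVar (n := n) fun i => by simp [hs]
  exact DFunLike.congr_fun this f

end RationalFunctions

/-- The operators `D₁⁺, …, D_{n−1}⁺` on `K = 𝕜(x₁,…,xₙ)` satisfy the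
Coxeter relations of the symmetric group `Sₙ`, and consequently there is a unique action
of `Sₙ` on `K` by `𝕜`-linear maps in which the simple transposition `(i, i+1)` acts as
`Dᵢ⁺` (the `⊕`-action).  Here `s` is the permutation action of `Sₙ` on `K` (characterized
by `hs`), from which the `Dᵢ⁺` are built. -/
theorem DPlus_coxeter_relations_and_unique_action
    (𝕜 : Type*) [Field 𝕜] [CharZero 𝕜] (n : ℕ) (hn : 1 ≤ n)
    (K : Type*) [Field K] [Algebra 𝕜 K] [Algebra (MvPolynomial (Fin n) 𝕜) K]
    [IsScalarTower 𝕜 (MvPolynomial (Fin n) 𝕜) K]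
    [IsFractionRing (MvPolynomial (Fin n) 𝕜) K]
    (s : Equiv.Perm (Fin n) → (K ≃ₐ[𝕜] K))
    (hs : ∀ (σ : Equiv.Perm (Fin n)) (i : Fin n), s σ (ratVar 𝕜 n K i) = ratVar 𝕜 n K (σ i)) :
    (∀ (i : ℕ) (hi : i + 1 < n), DPlus 𝕜 K s i hi * DPlus 𝕜 K s i hi = 1) ∧
    (∀ (i j : ℕ) (hi : i + 1 < n) (hj : j + 1 < n), i + 2 ≤ j ∨ j + 2 ≤ i →
      DPlus 𝕜 K s i hi * DPlus 𝕜 K s j hj = DPlus 𝕜 K s j hj * DPlus 𝕜 K s i hi) ∧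
    (∀ (i : ℕ) (hi : i + 2 < n),
      DPlus 𝕜 K s i (by omega) * DPlus 𝕜 K s (i + 1) hi * DPlus 𝕜 K s i (by omega) =
        DPlus 𝕜 K s (i + 1) hi * DPlus 𝕜 K s i (by omega) * DPlus 𝕜 K s (i + 1) hi) ∧
    (∃! Φ : Equiv.Perm (Fin n) →* Module.End 𝕜 K,
      ∀ (i : ℕ) (hi : i + 1 < n),
        Φ (Equiv.swap ⟨i, Nat.lt_of_succ_lt hi⟩ ⟨i + 1, hi⟩) = DPlus 𝕜 K s i hi) := by
  have hsq : ∀ (a b : Fin n) (f : K), s (Equiv.swap a b) (s (Equiv.swap a b) f) = f :=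
    fun a b f => by rw [permAction_mul hs, Equiv.swap_mul_self, permAction_one hs]
  have sq : ∀ (i : ℕ) (hi : i + 1 < n), DPlus 𝕜 K s i hi * DPlus 𝕜 K s i hi = 1 :=
    fun i hi => demazurePlusAux_mul_self (ratVar_sub_ne_zero (by simp)) (hsq _ _)
      (by simp [hs]) (by simp [hs])
  have comm : ∀ (i j : ℕ) (hi : i + 1 < n) (hj : j + 1 < n), i + 2 ≤ j →
      DPlus 𝕜 K s i hi * DPlus 𝕜 K s j hj = DPlus 𝕜 K s j hj * DPlus 𝕜 K s i hi := by
    intro i j hi hj hij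
    have hfix : ∀ a b c : Fin n, c ≠ a → c ≠ b →
        s (Equiv.swap a b) (ratVar 𝕜 n K c) = ratVar 𝕜 n K c := fun a b c h₁ h₂ => by
      rw [hs, Equiv.swap_apply_of_ne_of_ne h₁ h₂]
    refine demazurePlusAux_mul_comm (fun f => ?_) ?_ ?_
    · rw [permAction_mul hs, permAction_mul hs,
        Equiv.Perm.Disjoint.commute (Equiv.Perm.disjoint_swap_swap ?_)]
      simp
      omega
    · rw [map_sub, hfix, hfix] <;> simp <;> omega
    · rw [map_sub, hfix, hfix] <;> simp <;> omega
  have braid : ∀ (i : ℕ) (hi : i + 2 < n),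
      DPlus 𝕜 K s i (by omega) * DPlus 𝕜 K s (i + 1) hi * DPlus 𝕜 K s i (by omega) =
        DPlus 𝕜 K s (i + 1) hi * DPlus 𝕜 K s i (by omega) * DPlus 𝕜 K s (i + 1) hi := by
    intro i hi
    refine demazurePlusAux_braid (ratVar_sub_ne_zero (by simp)) (ratVar_sub_ne_zero (by simp))
      (ratVar_sub_ne_zero (by simp [Fin.ext_iff]; omega)) (hsq _ _) (hsq _ _) (fun f => ?_)
      (by simp [hs]) (by simp [hs]) ?_ ?_ (by simp [hs]) (by simp [hs])
    · simp only [permAction_mul hs, ← mul_assoc]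
      rw [Equiv.swap_braid (by simp) (by simp [Fin.ext_iff]; omega) (by simp)]
    · rw [hs, Equiv.swap_apply_of_ne_of_ne] <;> simp [Fin.ext_iff] <;> omega
    · rw [hs, Equiv.swap_apply_of_ne_of_ne] <;> simp [Fin.ext_iff] <;> omega
  exact ⟨sq, fun i j hi hj hij => hij.elim (comm i j hi hj) fun h => (comm j i hj hi h).symm,
    braid, Equiv.Perm.existsUnique_monoidHom_of_coxeter _ sq comm braid⟩
end
end

section
/- Fix integers 0 ≤ r ≤ n. Let Φ : Sₙ → End_𝕜(K) be any monoid homomorphism (with End_𝕜(K) under composition) such that Φ sends the transposition (i, i+1) to Dᵢ⁺ for every 1 ≤ i ≤ n−1. For λ ∈ P_{r,n}, 1 ≤ i ≤ r and 1 ≤ j ≤ n−r, set ε_{i,j}(λ) = 1 if j ≤ λᵢ and ε_{i,j}(λ) = −1 otherwise, and set y_{i,j} = (x_{r+1−i} − x_{r+j})^{−1} ∈ K. Then ∑_{π ∈ S_r×S_{n−r}} Φ(π)( ∑_{λ ∈ P_{r,n}} ∏_{i=1}^{r} ∏_{j=1}^{n−r} (1 + ε_{i,j}(λ)·y_{i,j})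 ) = n! (as an element of K), where S_r×S_{n−r} denotes the Young subgroup of Sₙ consisting of all permutations that preserve both {1,…,r} and {r+1,…,n}. -/
noncomputable section

open MvPolynomial

/-- Lagrange interpolation applied to `∏ (X - zᵢ) - ∏ (X - zᵢ - 1)`. -/
theorem sum_prod_one_add_inv_sub {K ι : Type*} [Field K] [Fintype ι] [DecidableEq ι]
    (z : ι → K) (hz : Function.Injective z) :
    ∑ k, ∏ i ∈ Finset.univ.erase k, (1 + (z i - z k)⁻¹) = (Fintype.card ι : K) := by
  cases isEmpty_or_nonempty ι
  · simp
  have hcard : 0 < (Finset.univ : Finset ι).card := Finset.card_pos.2 Finset.univ_nonempty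
  let P : Polynomial K := ∏ i, (Polynomial.X - Polynomial.C (z i))
  let Q : Polynomial K := ∏ i, (Polynomial.X - Polynomial.C (z i + 1))
  have hPm : P.Monic := Polynomial.monic_prod_X_sub_C z Finset.univ
  have hQm : Q.Monic := Polynomial.monic_prod_X_sub_C (fun i => z i + 1) Finset.univ
  have hPd : P.degree = (Finset.univ : Finset ι).card := by
    simp [P, Polynomial.degree_prod]
  have hQd : Q.degree = (Finset.univ : Finset ι).card := by
    simp only [Q, Polynomial.degree_prod, Polynomial.degree_X_sub_C]; simp
  have hdeg : (P - Q).degree < (Finset.univ : Finset ι).card := by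
    rw [← hPd]
    exact Polynomial.degree_sub_lt_left (hPd.trans hQd.symm) hPm.ne_zero
      (hPm.leadingCoeff.trans hQm.leadingCoeff.symm)
  have key := Lagrange.coeff_eq_sum (s := Finset.univ) (v := z) hz.injOn hdeg
  rw [Polynomial.coeff_sub, Polynomial.prod_X_sub_C_coeff_card_pred Finset.univ z hcard,
    Polynomial.prod_X_sub_C_coeff_card_pred Finset.univ (fun i => z i + 1) hcard] at key
  have hc : -∑ i, z i - -∑ i, (z i + 1) = (Fintype.card ι : K) := by
    simp [Finset.sum_add_distrib]
  rw [← hc, key]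
  refine Finset.sum_congr rfl fun k _ => ?_
  have hev : (P - Q).eval (z k) = ∏ i ∈ Finset.univ.erase k, (z k - z i - 1) := by
    rw [Polynomial.eval_sub]
    simp only [P, Q, Polynomial.eval_prod, Polynomial.eval_sub, Polynomial.eval_X,
      Polynomial.eval_C]
    rw [Finset.prod_eq_zero (Finset.mem_univ k) (sub_self _),
      ← Finset.mul_prod_erase _ _ (Finset.mem_univ k)]
    simp [sub_sub]
  rw [hev, ← Finset.prod_div_distrib]
  refine Finset.prod_congr rfl fun i hi => ?_
  have h1 : z k - z i ≠ 0 := sub_ne_zero.2 fun h => Finset.ne_of_mem_erase hi (hz h).symm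
  have h2 : z i - z k ≠ 0 := sub_ne_zero.2 fun h => Finset.ne_of_mem_erase hi (hz h)
  field_simp
  ring

/-- The product of `1 + (xⱼ - xᵢ)⁻¹` over all `i < j`. -/
def pairProd {K : Type*} [Field K] {n : ℕ} (x : Fin n → K) : K :=
  ∏ i, ∏ j ∈ Finset.Ioi i, (1 + (x j - x i)⁻¹)

theorem pairProd_succ {K : Type*} [Field K] {n : ℕ} (x : Fin (n + 1) → K) :
    pairProd x = (∏ i, (1 + ((x ∘ Fin.succ) i - x 0)⁻¹)) * pairProd (x ∘ Fin.succ) := by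
  simp [pairProd, Fin.prod_univ_succ, Fin.prod_Ioi_succ]

theorem swap_succ_succ_apply_succ {n : ℕ} (a b i : Fin n) :
    Equiv.swap a.succ b.succ i.succ = (Equiv.swap a b i).succ := by
  simp only [Equiv.swap_apply_def, Fin.succ_inj]
  split_ifs <;> rfl

theorem pairProd_comp_swap {K : Type*} [Field K] {n : ℕ} (x : Fin (n + 1) → K) (i : Fin n) :
    pairProd (x ∘ Equiv.swap i.castSucc i.succ) * (1 + (x i.succ - x i.castSucc)⁻¹) =
      pairProd x * (1 - (x i.succ - x i.castSucc)⁻¹) := by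
  induction n with
  | zero => exact i.elim0
  | succ n ih =>
    cases i using Fin.cases with
    | zero =>
      have h0 : ∀ i : Fin n, Equiv.swap (0 : Fin (n + 2)) (Fin.succ 0) i.succ.succ
          = i.succ.succ := fun i =>
        Equiv.swap_apply_of_ne_of_ne (by simp) (by simp [Fin.ext_iff])
      have hneg : (x 0 - x (Fin.succ 0))⁻¹ = -(x (Fin.succ 0) - x 0)⁻¹ := by
        rw [← inv_neg, neg_sub]
      have hcomp : ((x ∘ Equiv.swap (0 : Fin (n + 2)) (Fin.succ 0)) ∘ Fin.succ) ∘ Fin.succ =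
          (x ∘ Fin.succ) ∘ Fin.succ := by
        funext i
        simp only [Function.comp_apply, h0]
      rw [Fin.castSucc_zero, pairProd_succ, pairProd_succ (_ ∘ Fin.succ), pairProd_succ x,
        pairProd_succ (x ∘ Fin.succ), hcomp, Fin.prod_univ_succ, Fin.prod_univ_succ]
      simp only [Function.comp_apply, h0, Equiv.swap_apply_left, Equiv.swap_apply_right, hneg]
      ring
    | succ i =>
      have hcomp : (x ∘ Equiv.swap i.succ.castSucc i.succ.succ) ∘ Fin.succ =
          (x ∘ Fin.succ) ∘ Equiv.swap i.castSucc i.succ := by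
        funext j
        simp only [Function.comp_apply, Fin.castSucc_succ, swap_succ_succ_apply_succ]
      have hzero : Equiv.swap i.succ.castSucc i.succ.succ 0 = 0 :=
        Equiv.swap_apply_of_ne_of_ne (by simp [Fin.ext_iff]) (by simp [Fin.ext_iff])
      have hprod : ∏ j : Fin (n + 1), (1 + (x (Equiv.swap i.castSucc i.succ j).succ - x 0)⁻¹) =
          ∏ j : Fin (n + 1), (1 + (x j.succ - x 0)⁻¹) :=
        Equiv.prod_comp (Equiv.swap i.castSucc i.succ) fun j => 1 + (x j.succ - x 0)⁻¹
      rw [pairProd_succ, pairProd_succ x, hcomp]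
      simp only [Function.comp_apply, hzero]
      rw [hprod, mul_assoc, mul_assoc]
      congr 1
      exact ih (x ∘ Fin.succ) i

/-- The values of `x` other than `x k`, in some order. -/
def removeAt {K : Type*} {n : ℕ} (x : Fin (n + 1) → K) (k : Fin (n + 1)) : Fin n → K :=
  fun i => x (Equiv.swap 0 k i.succ)

theorem sum_perm_succ {K M : Type*} [AddCommMonoid M] {n : ℕ} (x : Fin (n + 1) → K)
    (f : K → (Fin n → K) → M) :
    ∑ σ : Equiv.Perm (Fin (n + 1)), f ((x ∘ σ) 0) ((x ∘ σ) ∘ Fin.succ) =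
      ∑ k, ∑ e : Equiv.Perm (Fin n), f (x k) (removeAt x k ∘ e) := by
  rw [← Equiv.sum_comp Equiv.Perm.decomposeFin.symm, Fintype.sum_prod_type]
  refine Finset.sum_congr rfl fun k _ => Finset.sum_congr rfl fun e _ => ?_
  congr 1
  · simp
  · funext i
    simp [removeAt]

theorem removeAt_injective {K : Type*} {n : ℕ} {x : Fin (n + 1) → K}
    (hx : Function.Injective x) (k : Fin (n + 1)) : Function.Injective (removeAt x k) :=
  hx.comp ((Equiv.injective _).comp (Fin.succ_injective n))

theorem prod_removeAt {K M : Type*} [CommMonoid M] {n : ℕ} (x : Fin (n + 1) → K)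
    (k : Fin (n + 1)) (f : K → M) :
    ∏ i, f (removeAt x k i) = ∏ i ∈ Finset.univ.erase k, f (x i) := by
  refine Finset.prod_bij (fun i _ => Equiv.swap 0 k i.succ) ?_ ?_ ?_ ?_
  · intro i _
    simp only [Finset.mem_erase, Finset.mem_univ, and_true]
    intro h
    rw [Equiv.swap_apply_eq_iff, Equiv.swap_apply_right] at h
    exact Fin.succ_ne_zero i h
  · intro a _ b _ h
    simpa using h
  · intro b hb
    have hne : Equiv.swap 0 k b ≠ 0 := by
      rw [Ne, Equiv.swap_apply_eq_iff, Equiv.swap_apply_left]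
      exact Finset.ne_of_mem_erase hb
    obtain ⟨i, hi⟩ := Fin.exists_succ_eq.2 hne
    exact ⟨i, Finset.mem_univ _, by rw [hi, Equiv.swap_apply_self]⟩
  · intro i _
    rfl

theorem sum_pairProd_comp_perm {K : Type*} [Field K] {n : ℕ} (x : Fin n → K)
    (hx : Function.Injective x) :
    ∑ σ : Equiv.Perm (Fin n), pairProd (x ∘ σ) = (n.factorial : K) := by
  induction n with
  | zero => simp [pairProd]
  | succ n ih =>
    calc ∑ σ : Equiv.Perm (Fin (n + 1)), pairProd (x ∘ σ)
        = ∑ k, ∑ e : Equiv.Perm (Fin n),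
            (∏ i, (1 + ((removeAt x k ∘ e) i - x k)⁻¹)) * pairProd (removeAt x k ∘ e) := by
          simp only [pairProd_succ]
          exact sum_perm_succ x fun a t => (∏ i, (1 + (t i - a)⁻¹)) * pairProd t
      _ = ∑ k, (∏ i ∈ Finset.univ.erase k, (1 + (x i - x k)⁻¹)) * (n.factorial : K) := by
          refine Finset.sum_congr rfl fun k _ => ?_
          rw [← ih _ (removeAt_injective hx k), Finset.mul_sum]
          refine Finset.sum_congr rfl fun e _ => ?_
          rw [← prod_removeAt x k fun t => 1 + (t - x k)⁻¹]
          congr 1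
          exact Equiv.prod_comp e fun i => 1 + (removeAt x k i - x k)⁻¹
      _ = ((n + 1).factorial : K) := by
          rw [← Finset.sum_mul, sum_prod_one_add_inv_sub x hx, Nat.factorial_succ]
          simp

/-- The sum over all shuffles of `x` and `y` of the products of `1 + (b - a)⁻¹` over all pairs
consisting of one entry of `x` and one entry of `y`, where `a` comes before `b` in the shuffle;
`lam i` is the number of entries of `y` that come before `x i`. -/
def shuffleSum {K : Type*} [Field K] {r m : ℕ} (x : Fin r → K) (y : Fin m → K) : K :=
  ∑ lam : Fin r → Fin (m + 1) with Monotone lam, ∏ i, ∏ j : Fin m,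
    (1 + (if (j : ℕ) < (lam i : ℕ) then (1 : K) else -1) * (x i - y j)⁻¹)

theorem shuffleSum_zero_left {K : Type*} [Field K] {m : ℕ} (x : Fin 0 → K) (y : Fin m → K) :
    shuffleSum x y = 1 := by
  rw [shuffleSum, Finset.filter_true_of_mem fun _ _ => Subsingleton.monotone _]
  simp

theorem shuffleSum_zero_right {K : Type*} [Field K] {r : ℕ} (x : Fin r → K) (y : Fin 0 → K) :
    shuffleSum x y = 1 := by
  have hmono : ∀ l : Fin r → Fin (0 + 1), Monotone l := fun l _ _ _ =>
    (Subsingleton.elim (α := Fin 1) _ _).le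
  rw [shuffleSum, Finset.filter_true_of_mem fun l _ => hmono l]
  simp

theorem monotone_cons_zero {r m : ℕ} {l : Fin r → Fin (m + 1)} (hl : Monotone l) :
    Monotone (Fin.cons 0 l : Fin (r + 1) → Fin (m + 1)) := by
  intro a b hab
  cases a using Fin.cases with
  | zero => simp
  | succ a =>
    cases b using Fin.cases with
    | zero => exact absurd hab (by simp)
    | succ b => simpa using hl (Fin.succ_le_succ_iff.1 hab)

theorem shuffleSum_succ_succ {K : Type*} [Field K] {r m : ℕ} (x : Fin (r + 1) → K)
    (y : Fin (m + 1) → K) :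
    shuffleSum x y =
      (∏ j, (1 + (y j - x 0)⁻¹)) * shuffleSum (x ∘ Fin.succ) y +
      (∏ i, (1 + (x i - y 0)⁻¹)) * shuffleSum x (y ∘ Fin.succ) := by
  rw [shuffleSum, ← Finset.sum_filter_add_sum_filter_not _ fun lam => lam 0 = 0,
    Finset.filter_filter, Finset.filter_filter]
  congr 1
  · rw [shuffleSum, Finset.mul_sum]
    refine Finset.sum_nbij' (fun l => l ∘ Fin.succ) (fun l => Fin.cons 0 l) ?_ ?_ ?_ ?_ ?_
    · intro l hl
      simp only [Finset.mem_filter, Finset.mem_univ, true_and] at hl ⊢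
      exact hl.1.comp Fin.strictMono_succ.monotone
    · intro l hl
      simp only [Finset.mem_filter, Finset.mem_univ, true_and] at hl ⊢
      exact ⟨monotone_cons_zero hl, rfl⟩
    · intro l hl
      simp only [Finset.mem_filter, Finset.mem_univ, true_and] at hl
      funext i
      cases i using Fin.cases with
      | zero => simp [hl.2]
      | succ i => simp
    · intro l _
      funext i
      simp
    · intro l hl
      simp only [Finset.mem_filter, Finset.mem_univ, true_and] at hl
      rw [Fin.prod_univ_succ]
      congr 1
      refine Finset.prod_congr rfl fun j _ => ?_
      rw [hl.2, ← neg_sub (x 0), inv_neg]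
      simp
  · rw [shuffleSum, Finset.mul_sum]
    have hpos : ∀ l : Fin (r + 1) → Fin (m + 2), Monotone l ∧ ¬ l 0 = 0 → ∀ i, l i ≠ 0 := by
      intro l hl i hi
      exact hl.2 (le_antisymm (hi ▸ hl.1 (Fin.zero_le i)) (Fin.zero_le _))
    symm
    refine Finset.sum_bij (fun l _ => Fin.succ ∘ l) ?_ ?_ ?_ ?_
    · intro l hl
      simp only [Finset.mem_filter, Finset.mem_univ, true_and] at hl ⊢
      exact ⟨Fin.strictMono_succ.monotone.comp hl, Fin.succ_ne_zero _⟩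
    · intro l _ l' _ h
      exact (Fin.succ_injective _).comp_left h
    · intro l hl
      simp only [Finset.mem_filter, Finset.mem_univ, true_and] at hl
      refine ⟨fun i => (l i).pred (hpos l hl i), ?_, ?_⟩
      · simp only [Finset.mem_filter, Finset.mem_univ, true_and]
        intro a b hab
        exact Fin.pred_le_pred_iff.2 (hl.1 hab)
      · funext i
        simp
    · intro l _
      rw [← Finset.prod_mul_distrib]
      refine Finset.prod_congr rfl fun i _ => ?_
      rw [Fin.prod_univ_succ]
      simp

theorem sum_perm_shuffleSum {K : Type*} [Field K] {r m : ℕ} (x : Fin r → K) (y : Fin m → K)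
    (hxy : Function.Injective (Sum.elim x y)) :
    ∑ σ : Equiv.Perm (Fin r), ∑ τ : Equiv.Perm (Fin m),
      pairProd (x ∘ σ) * pairProd (y ∘ τ) * shuffleSum (x ∘ σ) (y ∘ τ) =
      ((r + m).factorial : K) := by
  obtain ⟨hx, hy, hne⟩ := Sum.elim_injective.1 hxy
  induction r generalizing m with
  | zero =>
    simp only [shuffleSum_zero_left, mul_one, ← Finset.mul_sum, sum_pairProd_comp_perm y hy]
    simp [pairProd]
  | succ r ihr =>
    induction m with
    | zero =>
      simp only [shuffleSum_zero_right, mul_one, ← Finset.mul_sum, ← Finset.sum_mul,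
        sum_pairProd_comp_perm x hx]
      simp [pairProd]
    | succ m ihm =>
      have hxk : ∀ k, ∑ σ : Equiv.Perm (Fin r), ∑ τ : Equiv.Perm (Fin (m + 1)),
          pairProd (removeAt x k ∘ σ) * pairProd (y ∘ τ) *
            shuffleSum (removeAt x k ∘ σ) (y ∘ τ) = ((r + (m + 1)).factorial : K) := by
        intro k
        have h1 := removeAt_injective hx k
        have h2 : ∀ a b, removeAt x k a ≠ y b := fun a b => hne _ b
        exact ihr _ _ (Sum.elim_injective.2 ⟨h1, hy, h2⟩) h1 hy h2
      have hyk : ∀ k, ∑ σ : Equiv.Perm (Fin (r + 1)), ∑ τ : Equiv.Perm (Fin m),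
          pairProd (x ∘ σ) * pairProd (removeAt y k ∘ τ) *
            shuffleSum (x ∘ σ) (removeAt y k ∘ τ) = ((r + 1 + m).factorial : K) := by
        intro k
        have h1 := removeAt_injective hy k
        have h2 : ∀ a b, x a ≠ removeAt y k b := fun a b => hne a _
        exact ihm _ (Sum.elim_injective.2 ⟨hx, h1, h2⟩) h1 h2
      have hfirst : ∑ σ : Equiv.Perm (Fin (r + 1)), ∑ τ : Equiv.Perm (Fin (m + 1)),
          pairProd (x ∘ σ) * pairProd (y ∘ τ) *
            ((∏ j, (1 + ((y ∘ τ) j - (x ∘ σ) 0)⁻¹)) *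
              shuffleSum ((x ∘ σ) ∘ Fin.succ) (y ∘ τ)) =
          ∑ k, (∏ i ∈ Finset.univ.erase k, (1 + (x i - x k)⁻¹)) *
            (∏ j, (1 + (y j - x k)⁻¹)) * ((r + (m + 1)).factorial : K) := by
        simp only [pairProd_succ (x ∘ _)]
        rw [sum_perm_succ x fun a t => ∑ τ : Equiv.Perm (Fin (m + 1)),
          (∏ i, (1 + (t i - a)⁻¹)) * pairProd t * pairProd (y ∘ τ) *
            ((∏ j, (1 + ((y ∘ τ) j - a)⁻¹)) * shuffleSum t (y ∘ τ))]
        refine Finset.sum_congr rfl fun k _ => ?_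
        rw [← hxk k, Finset.mul_sum]
        refine Finset.sum_congr rfl fun σ _ => ?_
        rw [Finset.mul_sum]
        refine Finset.sum_congr rfl fun τ _ => ?_
        have e1 : ∏ i, (1 + ((removeAt x k ∘ σ) i - x k)⁻¹) =
            ∏ i ∈ Finset.univ.erase k, (1 + (x i - x k)⁻¹) := by
          rw [← prod_removeAt x k fun t => 1 + (t - x k)⁻¹]
          exact Equiv.prod_comp σ fun i => 1 + (removeAt x k i - x k)⁻¹
        have e2 : ∏ j, (1 + ((y ∘ τ) j - x k)⁻¹) = ∏ j, (1 + (y j - x k)⁻¹) :=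
          Equiv.prod_comp τ fun j => 1 + (y j - x k)⁻¹
        rw [e1, e2]
        ring
      have hsecond : ∑ σ : Equiv.Perm (Fin (r + 1)), ∑ τ : Equiv.Perm (Fin (m + 1)),
          pairProd (x ∘ σ) * pairProd (y ∘ τ) *
            ((∏ i, (1 + ((x ∘ σ) i - (y ∘ τ) 0)⁻¹)) *
              shuffleSum (x ∘ σ) ((y ∘ τ) ∘ Fin.succ)) =
          ∑ k, (∏ j ∈ Finset.univ.erase k, (1 + (y j - y k)⁻¹)) *
            (∏ i, (1 + (x i - y k)⁻¹)) * ((r + 1 + m).factorial : K) := by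
        simp only [pairProd_succ (y ∘ _)]
        rw [Finset.sum_comm, sum_perm_succ y fun a t => ∑ σ : Equiv.Perm (Fin (r + 1)),
          pairProd (x ∘ σ) * ((∏ i, (1 + (t i - a)⁻¹)) * pairProd t) *
            ((∏ i, (1 + ((x ∘ σ) i - a)⁻¹)) * shuffleSum (x ∘ σ) t)]
        refine Finset.sum_congr rfl fun k _ => ?_
        rw [← hyk k, Finset.sum_comm, Finset.mul_sum]
        refine Finset.sum_congr rfl fun σ _ => ?_
        rw [Finset.mul_sum]
        refine Finset.sum_congr rfl fun τ _ => ?_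
        have e1 : ∏ i, (1 + ((removeAt y k ∘ τ) i - y k)⁻¹) =
            ∏ i ∈ Finset.univ.erase k, (1 + (y i - y k)⁻¹) := by
          rw [← prod_removeAt y k fun t => 1 + (t - y k)⁻¹]
          exact Equiv.prod_comp τ fun i => 1 + (removeAt y k i - y k)⁻¹
        have e2 : ∏ i, (1 + ((x ∘ σ) i - y k)⁻¹) = ∏ i, (1 + (x i - y k)⁻¹) :=
          Equiv.prod_comp σ fun i => 1 + (x i - y k)⁻¹
        rw [e1, e2]
        ring
      have hinl : ∀ k, ∏ i ∈ Finset.univ.erase (Sum.inl k),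
          (1 + (Sum.elim x y i - x k)⁻¹) =
          (∏ i ∈ Finset.univ.erase k, (1 + (x i - x k)⁻¹)) * ∏ j, (1 + (y j - x k)⁻¹) := by
        intro k
        simp only [← Finset.filter_ne', Finset.prod_filter, Fintype.prod_sum_type]
        simp
      have hinr : ∀ k, ∏ i ∈ Finset.univ.erase (Sum.inr k),
          (1 + (Sum.elim x y i - y k)⁻¹) =
          (∏ j ∈ Finset.univ.erase k, (1 + (y j - y k)⁻¹)) * ∏ i, (1 + (x i - y k)⁻¹) := by
        intro k
        simp only [← Finset.filter_ne', Finset.prod_filter, Fintype.prod_sum_type]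
        simp [mul_comm]
      have hlag := sum_prod_one_add_inv_sub (Sum.elim x y) hxy
      rw [Fintype.sum_sum_type] at hlag
      simp only [Sum.elim_inl, Sum.elim_inr, hinl, hinr] at hlag
      simp only [shuffleSum_succ_succ, mul_add, Finset.sum_add_distrib]
      rw [hfirst, hsecond, ← Finset.sum_mul, ← Finset.sum_mul,
        show r + (m + 1) = r + 1 + m by omega, ← add_mul, hlag,
        show r + 1 + (m + 1) = r + 1 + m + 1 by omega, Nat.factorial_succ,
        Fintype.card_sum, Fintype.card_fin, Fintype.card_fin, Nat.cast_mul,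
        show r + 1 + (m + 1) = r + 1 + m + 1 by omega]

theorem map_pairProd {K : Type*} [Field K] {n : ℕ} (φ : K →+* K) (x : Fin n → K) :
    φ (pairProd x) = pairProd (φ ∘ x) := by
  simp [pairProd, map_prod, map_inv₀]

theorem map_shuffleSum {K : Type*} [Field K] {r m : ℕ} (φ : K →+* K) (x : Fin r → K)
    (y : Fin m → K) : φ (shuffleSum x y) = shuffleSum (φ ∘ x) (φ ∘ y) := by
  simp [shuffleSum, map_prod, map_inv₀, apply_ite φ]

theorem pairProd_comp_swap_of_lt {K : Type*} [Field K] {n : ℕ} (x : Fin n → K) (i : ℕ)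
    (hi : i + 1 < n) :
    pairProd (x ∘ Equiv.swap ⟨i, Nat.lt_of_succ_lt hi⟩ ⟨i + 1, hi⟩) *
        (1 + (x ⟨i + 1, hi⟩ - x ⟨i, Nat.lt_of_succ_lt hi⟩)⁻¹) =
      pairProd x * (1 - (x ⟨i + 1, hi⟩ - x ⟨i, Nat.lt_of_succ_lt hi⟩)⁻¹) := by
  cases n with
  | zero => omega
  | succ n => exact pairProd_comp_swap x ⟨i, by omega⟩

theorem submonoid_eq_top_of_simple_swap_mem {n : ℕ} (M : Submonoid (Equiv.Perm (Fin n)))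
    (hM : ∀ (i : ℕ) (hi : i + 1 < n),
      Equiv.swap ⟨i, Nat.lt_of_succ_lt hi⟩ ⟨i + 1, hi⟩ ∈ M) : M = ⊤ := by
  cases n with
  | zero => exact top_unique fun σ _ => Subsingleton.elim 1 σ ▸ M.one_mem
  | succ n =>
    rw [eq_top_iff, ← Equiv.Perm.mclosure_swap_castSucc_succ, Submonoid.closure_le]
    rintro _ ⟨i, rfl⟩
    exact hM i (by omega)

/-- If `Ψ a - 1 = u (t a - 1)` for generators `a` of a finite group acting by field automorphisms
`t`, and each `g u` is fixed by the corresponding generator, then the sum of all `Ψ a` is the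
symmetrization of multiplication by `g`. -/
theorem sum_apply_eq_sum_symmetrization {𝕜 K H : Type*} [Field 𝕜] [Field K] [CharZero K]
    [Algebra 𝕜 K] [Group H] [Fintype H] (t : H →* (K ≃ₐ[𝕜] K)) (Ψ : H →* Module.End 𝕜 K)
    (g : K) (S : Set H) (hS : Submonoid.closure S = ⊤)
    (h : ∀ a ∈ S, ∃ u : K, u ≠ 0 ∧ (∀ f, Ψ a f - f = u * (t a f - f)) ∧ t a (g * u) = g * u)
    (hg : ∑ a, t a g = (Fintype.card H : K)) (f : K) :
    ∑ a, Ψ a f = ∑ a, t a (g * f) := by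
  have hinv : ∀ a, t a (∑ b, Ψ b f) = ∑ b, Ψ b f := by
    intro a
    have ha : a ∈ Submonoid.closure S := hS ▸ Submonoid.mem_top a
    induction ha using Submonoid.closure_induction with
    | mem a ha =>
      obtain ⟨u, hu, hD, -⟩ := h a ha
      have hfix : Ψ a (∑ b, Ψ b f) = ∑ b, Ψ b f := by
        rw [map_sum, ← Equiv.sum_comp (Equiv.mulLeft a) fun b => Ψ b f]
        simp [map_mul]
      have := hD (∑ b, Ψ b f)
      rw [hfix, sub_self, eq_comm, mul_eq_zero] at this
      exact sub_eq_zero.1 (this.resolve_left hu)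
    | one => simp
    | mul a b _ _ ha hb => rw [map_mul, AlgEquiv.mul_apply, hb, ha]
  have habs : ∀ a f, ∑ b, t b (g * Ψ a f) = ∑ b, t b (g * f) := by
    intro a
    have ha : a ∈ Submonoid.closure S := hS ▸ Submonoid.mem_top a
    induction ha using Submonoid.closure_induction with
    | mem a ha =>
      intro f
      obtain ⟨u, -, hD, hgu⟩ := h a ha
      have hgf : g * Ψ a f = g * f + (t a (g * u * f) - g * u * f) := by
        rw [map_mul, hgu, ← sub_add_cancel (Ψ a f) f, hD]
        ring
      have hshift : ∑ b, t b (t a (g * u * f)) = ∑ b, t b (g * u * f) := by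
        rw [← Equiv.sum_comp (Equiv.mulRight a) fun b => t b (g * u * f)]
        simp [map_mul]
      simp only [hgf, map_add, map_sub, Finset.sum_add_distrib, Finset.sum_sub_distrib]
      rw [hshift, sub_self, add_zero]
    | one => simp
    | mul a b _ _ ha hb =>
      intro f
      rw [map_mul, Module.End.mul_apply, ha, hb]
  have hcard : (Fintype.card H : K) ≠ 0 := Nat.cast_ne_zero.2 Fintype.card_ne_zero
  apply mul_left_cancel₀ hcard
  calc (Fintype.card H : K) * ∑ a, Ψ a f
      = ∑ b, t b (g * ∑ a, Ψ a f) := by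
        rw [← hg, Finset.sum_mul]
        exact Finset.sum_congr rfl fun b _ => by rw [map_mul, hinv]
    _ = ∑ a, ∑ b, t b (g * Ψ a f) := by
        rw [Finset.sum_comm]
        exact Finset.sum_congr rfl fun b _ => by rw [Finset.mul_sum, map_sum]
    _ = (Fintype.card H : K) * ∑ a, t a (g * f) := by
        simp only [habs, Finset.sum_const, Finset.card_univ, nsmul_eq_mul]

/-- The decomposition of `Fin n` into its first `r` and its last `n - r` elements. -/
def blockEquiv {n r : ℕ} (hr : r ≤ n) : Fin r ⊕ Fin (n - r) ≃ Fin n :=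
  finSumFinEquiv.trans (finCongr (Nat.add_sub_of_le hr))

theorem blockEquiv_inl {n r : ℕ} (hr : r ≤ n) (i : Fin r) :
    blockEquiv hr (Sum.inl i) = ⟨i, by omega⟩ :=
  rfl

theorem blockEquiv_inr {n r : ℕ} (hr : r ≤ n) (j : Fin (n - r)) :
    blockEquiv hr (Sum.inr j) = ⟨r + j, by omega⟩ :=
  rfl

/-- The embedding of the Young subgroup `S_r × S_{n-r}` into `S_n`. -/
def youngHom {n r : ℕ} (hr : r ≤ n) :
    Equiv.Perm (Fin r) × Equiv.Perm (Fin (n - r)) →* Equiv.Perm (Fin n) :=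
  (blockEquiv hr).permCongrHom.toMonoidHom.comp (Equiv.Perm.sumCongrHom _ _)

theorem youngHom_apply {n r : ℕ} (hr : r ≤ n)
    (a : Equiv.Perm (Fin r) × Equiv.Perm (Fin (n - r))) (z : Fin r ⊕ Fin (n - r)) :
    youngHom hr a (blockEquiv hr z) = blockEquiv hr (Sum.map a.1 a.2 z) := by
  simp [youngHom, Equiv.permCongr_apply]

theorem youngHom_injective {n r : ℕ} (hr : r ≤ n) : Function.Injective (youngHom hr) :=
  (blockEquiv hr).permCongrHom.injective.comp Equiv.Perm.sumCongrHom_injective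

theorem youngHom_swap_one {n r : ℕ} (hr : r ≤ n) (i j : Fin r) :
    youngHom hr (Equiv.swap i j, 1) =
      Equiv.swap (blockEquiv hr (Sum.inl i)) (blockEquiv hr (Sum.inl j)) := by
  rw [← Equiv.symm_trans_swap_trans, ← Equiv.Perm.sumCongr_swap_one]
  rfl

theorem youngHom_one_swap {n r : ℕ} (hr : r ≤ n) (i j : Fin (n - r)) :
    youngHom hr (1, Equiv.swap i j) =
      Equiv.swap (blockEquiv hr (Sum.inr i)) (blockEquiv hr (Sum.inr j)) := by
  rw [← Equiv.symm_trans_swap_trans, ← Equiv.Perm.sumCongr_one_swap]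
  rfl

theorem sum_preserving_eq_sum_young {M : Type*} [AddCommMonoid M] {n r : ℕ} (hr : r ≤ n)
    (f : Equiv.Perm (Fin n) → M) :
    ∑ π ∈ Finset.univ.filter
        (fun σ : Equiv.Perm (Fin n) => ∀ x : Fin n, ((x : ℕ) < r ↔ ((σ x : ℕ) < r))), f π =
      ∑ a, f (youngHom hr a) := by
  symm
  refine Finset.sum_bij (fun a _ => youngHom hr a) ?_ ?_ ?_ fun _ _ => rfl
  · intro a _
    simp only [Finset.mem_filter, Finset.mem_univ, true_and]
    intro x
    obtain ⟨z, rfl⟩ := (blockEquiv hr).surjective x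
    rw [youngHom_apply]
    cases z <;> simp [blockEquiv_inl, blockEquiv_inr]
  · intro a _ b _ h
    exact youngHom_injective hr h
  · intro σ hσ
    simp only [Finset.mem_filter, Finset.mem_univ, true_and] at hσ
    have hmaps : Set.MapsTo ((blockEquiv hr).symm.permCongr σ) (Set.range Sum.inl)
        (Set.range Sum.inl) := by
      rintro _ ⟨i, rfl⟩
      have hlt : (σ (blockEquiv hr (Sum.inl i)) : ℕ) < r := (hσ _).1 i.isLt
      obtain ⟨z, hz⟩ := (blockEquiv hr).surjective (σ (blockEquiv hr (Sum.inl i)))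
      rw [Equiv.permCongr_apply, Equiv.symm_symm, ← hz, Equiv.symm_apply_apply]
      rw [← hz] at hlt
      cases z with
      | inl k => exact ⟨k, rfl⟩
      | inr k => simp [blockEquiv_inr] at hlt
    obtain ⟨a, ha⟩ := Equiv.Perm.mem_sumCongrHom_range_of_perm_mapsTo_inl hmaps
    refine ⟨a, Finset.mem_univ _, ?_⟩
    rw [youngHom, MonoidHom.comp_apply, ha]
    ext x
    simp [Equiv.permCongr_apply]

theorem algEquiv_ext_ratVar {𝕜 : Type*} [Field 𝕜] {n : ℕ} {K : Type*} [Field K] [Algebra 𝕜 K]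
    [Algebra (MvPolynomial (Fin n) 𝕜) K] [IsScalarTower 𝕜 (MvPolynomial (Fin n) 𝕜) K]
    [IsFractionRing (MvPolynomial (Fin n) 𝕜) K] {φ ψ : K ≃ₐ[𝕜] K}
    (h : ∀ i, φ (ratVar 𝕜 n K i) = ψ (ratVar 𝕜 n K i)) : φ = ψ := by
  have hring : (φ : K →+* K) = (ψ : K →+* K) := by
    apply IsLocalization.ringHom_ext (nonZeroDivisors (MvPolynomial (Fin n) 𝕜))
    refine MvPolynomial.ringHom_ext (fun a => ?_) fun i => h i
    have ha : algebraMap (MvPolynomial (Fin n) 𝕜) K (MvPolynomial.C a) = algebraMap 𝕜 K a :=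
      (IsScalarTower.algebraMap_apply 𝕜 (MvPolynomial (Fin n) 𝕜) K a).symm
    simp [ha]
  ext f
  exact RingHom.congr_fun hring f

theorem ratVar_injective (𝕜 : Type*) [Field 𝕜] (n : ℕ) (K : Type*) [Field K]
    [Algebra (MvPolynomial (Fin n) 𝕜) K] [IsFractionRing (MvPolynomial (Fin n) 𝕜) K] :
    Function.Injective (ratVar 𝕜 n K) :=
  (IsFractionRing.injective (MvPolynomial (Fin n) 𝕜) K).comp (MvPolynomial.X_injective)

theorem sum_antitone_eq_shuffleSum {K : Type*} [Field K] {r m : ℕ} (x : Fin r → K)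
    (y : Fin m → K) :
    ∑ lam ∈ Finset.univ.filter (fun lam : Fin r → Fin (m + 1) =>
        ∀ a b : Fin r, a ≤ b → (lam b : ℕ) ≤ (lam a : ℕ)),
      ∏ i : Fin r, ∏ j : Fin m,
        (1 + (if (j : ℕ) < (lam i : ℕ) then (1 : K) else -1) * (x i.rev - y j)⁻¹) =
      shuffleSum x y := by
  refine Finset.sum_nbij' (fun l => l ∘ Fin.rev) (fun l => l ∘ Fin.rev) ?_ ?_ ?_ ?_ ?_
  · intro l hl
    simp only [Finset.mem_filter, Finset.mem_univ, true_and] at hl ⊢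
    exact fun a b hab => hl _ _ (Fin.rev_le_rev.2 hab)
  · intro l hl
    simp only [Finset.mem_filter, Finset.mem_univ, true_and] at hl ⊢
    exact fun a b hab => hl (Fin.rev_le_rev.2 hab)
  · intro l _
    funext i
    simp
  · intro l _
    funext i
    simp
  · intro l _
    rw [← Equiv.prod_comp Fin.revPerm]
    simp

/-- Fix `0 ≤ r ≤ n` and let `Φ : Sₙ → End_𝕜(K)` be any monoid
homomorphism sending each simple transposition to the corresponding operator `Dᵢ⁺`.
Summing, over all `π` in the Young subgroup `S_r × S_{n−r}` of `Sₙ` (those permutations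
preserving both blocks of indices), the value of `Φ π` on
`∑_{λ ∈ P_{r,n}} ∏_{i=1}^{r} ∏_{j=1}^{n−r} (1 + ε_{i,j}(λ)·y_{i,j})` gives `n!`.
Here (in the `1`-indexed notation of the paper) `λ` runs over partitions fitting in an
`r × (n−r)` box, `ε_{i,j}(λ) = 1` if `j ≤ λᵢ` and `−1` otherwise, and
`y_{i,j} = (x_{r+1−i} − x_{r+j})⁻¹`; below everything is `0`-indexed. -/
theorem sum_DPlus_action_eq_factorial
    (𝕜 : Type*) [Field 𝕜] [CharZero 𝕜] (n r : ℕ) (hn : 1 ≤ n) (hr : r ≤ n)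
    (K : Type*) [Field K] [Algebra 𝕜 K] [Algebra (MvPolynomial (Fin n) 𝕜) K]
    [IsScalarTower 𝕜 (MvPolynomial (Fin n) 𝕜) K]
    [IsFractionRing (MvPolynomial (Fin n) 𝕜) K]
    (s : Equiv.Perm (Fin n) → (K ≃ₐ[𝕜] K))
    (hs : ∀ (σ : Equiv.Perm (Fin n)) (i : Fin n), s σ (ratVar 𝕜 n K i) = ratVar 𝕜 n K (σ i))
    (Φ : Equiv.Perm (Fin n) →* Module.End 𝕜 K)
    (hΦ : ∀ (i : ℕ) (hi : i + 1 < n),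
      Φ (Equiv.swap ⟨i, Nat.lt_of_succ_lt hi⟩ ⟨i + 1, hi⟩) = DPlus 𝕜 K s i hi) :
    ∑ π ∈ Finset.univ.filter
        (fun σ : Equiv.Perm (Fin n) => ∀ x : Fin n, ((x : ℕ) < r ↔ ((σ x : ℕ) < r))),
      Φ π (∑ lam ∈ Finset.univ.filter
          (fun lam : Fin r → Fin (n - r + 1) =>
            ∀ a b : Fin r, a ≤ b → (lam b : ℕ) ≤ (lam a : ℕ)),
        ∏ i : Fin r, ∏ j : Fin (n - r),
          (1 + (if (j : ℕ) < (lam i : ℕ) then (1 : K) else -1) *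
            (ratVar 𝕜 n K ⟨r - 1 - (i : ℕ), by have := i.isLt; omega⟩ -
              ratVar 𝕜 n K ⟨r + (j : ℕ), by have := j.isLt; omega⟩)⁻¹)) =
      (n.factorial : K) := by
  obtain ⟨t, ht⟩ : ∃ t : Equiv.Perm (Fin n) →* (K ≃ₐ[𝕜] K), ∀ σ, t σ = s σ :=
    ⟨{ toFun := s
       map_one' := algEquiv_ext_ratVar (n := n) fun i => by simp [hs]
       map_mul' := fun σ τ => algEquiv_ext_ratVar (n := n) fun i => by simp [hs] }, fun _ => rfl⟩
  have hK : CharZero K := charZero_of_injective_algebraMap (algebraMap 𝕜 K).injective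
  let x : Fin r → K := fun i => ratVar 𝕜 n K (blockEquiv hr (Sum.inl i))
  let y : Fin (n - r) → K := fun j => ratVar 𝕜 n K (blockEquiv hr (Sum.inr j))
  have hxy : Function.Injective (Sum.elim x y) := by
    have : Sum.elim x y = ratVar 𝕜 n K ∘ blockEquiv hr := by
      funext z
      cases z <;> rfl
    rw [this]
    exact (ratVar_injective 𝕜 n K).comp (blockEquiv hr).injective
  have htx : ∀ a, t (youngHom hr a) ∘ x = x ∘ a.1 := fun a => by
    funext i
    simp only [x, Function.comp_apply, ht, hs, youngHom_apply, Sum.map_inl]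
  have hty : ∀ a, t (youngHom hr a) ∘ y = y ∘ a.2 := fun a => by
    funext j
    simp only [y, Function.comp_apply, ht, hs, youngHom_apply, Sum.map_inr]
  have htpx : ∀ a, t (youngHom hr a) (pairProd x) = pairProd (x ∘ a.1) := fun a => by
    rw [← htx]
    exact map_pairProd (t (youngHom hr a) : K →+* K) x
  have htpy : ∀ a, t (youngHom hr a) (pairProd y) = pairProd (y ∘ a.2) := fun a => by
    rw [← hty]
    exact map_pairProd (t (youngHom hr a) : K →+* K) y
  have htF : ∀ a, t (youngHom hr a) (shuffleSum x y) = shuffleSum (x ∘ a.1) (y ∘ a.2) :=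
    fun a => by
      rw [← htx, ← hty]
      exact map_shuffleSum (t (youngHom hr a) : K →+* K) x y
  have hsum : ∑ a, t (youngHom hr a) (pairProd x * pairProd y) =
      (Fintype.card (Equiv.Perm (Fin r) × Equiv.Perm (Fin (n - r))) : K) := by
    obtain ⟨hx, hy, -⟩ := Sum.elim_injective.1 hxy
    simp only [map_mul, htpx, htpy, Fintype.sum_prod_type, ← Finset.mul_sum, ← Finset.sum_mul,
      sum_pairProd_comp_perm x hx, sum_pairProd_comp_perm y hy]
    simp [Fintype.card_perm]
  have hgen : ∀ a (i : ℕ) (hi : i + 1 < n),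
      youngHom hr a = Equiv.swap ⟨i, Nat.lt_of_succ_lt hi⟩ ⟨i + 1, hi⟩ →
      pairProd (x ∘ a.1) * pairProd (y ∘ a.2) *
        (1 + (ratVar 𝕜 n K ⟨i + 1, hi⟩ - ratVar 𝕜 n K ⟨i, Nat.lt_of_succ_lt hi⟩)⁻¹) =
      pairProd x * pairProd y *
        (1 - (ratVar 𝕜 n K ⟨i + 1, hi⟩ - ratVar 𝕜 n K ⟨i, Nat.lt_of_succ_lt hi⟩)⁻¹) →
      ∃ u : K, u ≠ 0 ∧ (∀ f, Φ (youngHom hr a) f - f = u * (t (youngHom hr a) f - f)) ∧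
        t (youngHom hr a) (pairProd x * pairProd y * u) = pairProd x * pairProd y * u := by
    intro a i hi ha hprod
    set c := ratVar 𝕜 n K ⟨i + 1, hi⟩ - ratVar 𝕜 n K ⟨i, Nat.lt_of_succ_lt hi⟩ with hc
    have htc : t (youngHom hr a) c = -c := by
      rw [hc, map_sub, ha, ht, hs, hs, Equiv.swap_apply_left, Equiv.swap_apply_right, neg_sub]
    refine ⟨1 - c⁻¹, ?_, fun f => ?_, ?_⟩
    · intro h0
      have hc1 : c = 1 := by
        rwa [sub_eq_zero, eq_comm, inv_eq_one] at h0
      rw [hc1, map_one] at htc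
      norm_num [eq_neg_iff_add_eq_zero] at htc
    · rw [ha, hΦ, ht]
      simp only [DPlus, demazurePlusAux, LinearMap.add_apply, LinearMap.comp_apply,
        LinearMap.sub_apply, LinearMap.id_apply, LinearMap.mulRight_apply,
        AlgEquiv.toLinearMap_apply]
      rw [← hc]
      ring
    · rw [map_mul, map_mul, htpx, htpy, map_sub, map_one, map_inv₀, htc, inv_neg,
        sub_neg_eq_add, hprod]
  let S : Set (Equiv.Perm (Fin r) × Equiv.Perm (Fin (n - r))) := {a | ∃ u : K, u ≠ 0 ∧
    (∀ f, Φ (youngHom hr a) f - f = u * (t (youngHom hr a) f - f)) ∧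
      t (youngHom hr a) (pairProd x * pairProd y * u) = pairProd x * pairProd y * u}
  have hclosure : Submonoid.closure S = ⊤ := by
    have hleft : (Submonoid.closure S).comap (MonoidHom.inl _ _) = ⊤ := by
      refine submonoid_eq_top_of_simple_swap_mem _ fun i hi => Submonoid.subset_closure ?_
      refine hgen _ i (by omega) (youngHom_swap_one hr _ _) ?_
      have hswap : pairProd (x ∘ Equiv.swap ⟨i, Nat.lt_of_succ_lt hi⟩ ⟨i + 1, hi⟩) *
            (1 + (ratVar 𝕜 n K ⟨i + 1, by omega⟩ - ratVar 𝕜 n K ⟨i, by omega⟩)⁻¹) =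
          pairProd x * (1 - (ratVar 𝕜 n K ⟨i + 1, by omega⟩ - ratVar 𝕜 n K ⟨i, by omega⟩)⁻¹) :=
        pairProd_comp_swap_of_lt x i hi
      simp only [MonoidHom.inl_apply, Equiv.Perm.coe_one, Function.comp_id]
      linear_combination pairProd y * hswap
    have hright : (Submonoid.closure S).comap (MonoidHom.inr _ _) = ⊤ := by
      refine submonoid_eq_top_of_simple_swap_mem _ fun i hi => Submonoid.subset_closure ?_
      refine hgen _ (r + i) (by omega) (youngHom_one_swap hr _ _) ?_
      have hswap : pairProd (y ∘ Equiv.swap ⟨i, Nat.lt_of_succ_lt hi⟩ ⟨i + 1, hi⟩) *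
            (1 + (ratVar 𝕜 n K ⟨r + i + 1, by omega⟩ - ratVar 𝕜 n K ⟨r + i, by omega⟩)⁻¹) =
          pairProd y *
            (1 - (ratVar 𝕜 n K ⟨r + i + 1, by omega⟩ - ratVar 𝕜 n K ⟨r + i, by omega⟩)⁻¹) :=
        pairProd_comp_swap_of_lt y i hi
      simp only [MonoidHom.inr_apply, Equiv.Perm.coe_one, Function.comp_id]
      linear_combination pairProd x * hswap
    refine top_unique fun a _ => ?_
    have h1 : a.1 ∈ (Submonoid.closure S).comap (MonoidHom.inl _ _) := hleft ▸ Submonoid.mem_top _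
    have h2 : a.2 ∈ (Submonoid.closure S).comap (MonoidHom.inr _ _) := hright ▸ Submonoid.mem_top _
    simpa using (Submonoid.closure S).mul_mem h1 h2
  have key := sum_apply_eq_sum_symmetrization (t.comp (youngHom hr)) (Φ.comp (youngHom hr))
    (pairProd x * pairProd y) S hclosure (fun a ha => ha) hsum (shuffleSum x y)
  have hfinal := sum_perm_shuffleSum x y hxy
  rw [Nat.add_sub_of_le hr, ← Fintype.sum_prod_type'] at hfinal
  rw [sum_preserving_eq_sum_young hr, ← hfinal]
  have hrev : ∀ i : Fin r, ratVar 𝕜 n K ⟨r - 1 - (i : ℕ), by omega⟩ = x i.rev := by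
    intro i
    simp only [x, blockEquiv_inl, Fin.val_rev]
    congr 2
    omega
  simp only [hrev]
  refine (Finset.sum_congr rfl fun a _ =>
    congrArg (Φ (youngHom hr a)) (sum_antitone_eq_shuffleSum x y)).trans (key.trans ?_)
  refine Finset.sum_congr rfl fun a _ => ?_
  rw [MonoidHom.comp_apply, map_mul, map_mul, htpx, htpy, htF]
end
end

section
/- Let r ≥ 1 and m ≥ 0 be integers. In the field K = 𝕜(x₁,…,x_r) of rational functions over a field 𝕜 of characteristic zero, the following identity holds: x_r^{−m−1} + ∑_{i=1}^{r−1} (Dᵢ⁺ ∘ D_{i+1}⁺ ∘ ⋯ ∘ D_{r−1}⁺)(x_r^{−m−1}) = δ_{m,0} − ∑_{(p₁,…,p_r)} ∏_{i : pᵢ > 0} (−xᵢ^{−pᵢ}), where the right-hand sum is over all tuples (p₁,…,p_r) of nonnegative integers satisfying p₁ + ⋯ + p_r + #{i : pᵢ = 0} = m + r, the product over those indices i with pᵢ > 0 (an empty product being 1), and δ_{m,0} equals 1 if m = 0 and 0 otherwise. -/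
noncomputable section

open MvPolynomial

/-- The operator `Dᵢ⁺`, extended by the identity for indices `i` out of range (it is
only ever used below for in-range indices). -/
def DPlusTotal (𝕜 : Type*) [Field 𝕜] {n : ℕ} (K : Type*) [Field K] [Algebra 𝕜 K]
    [Algebra (MvPolynomial (Fin n) 𝕜) K]
    (s : Equiv.Perm (Fin n) → (K ≃ₐ[𝕜] K)) (i : ℕ) : Module.End 𝕜 K :=
  if hi : i + 1 < n then DPlus 𝕜 K s i hi else 1

/-- The geometric series `∑ x⁻ᵉ⁻¹ Xᵉ`, i.e. the expansion of `1 / (x - X)`. -/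
def invSubSeries {K : Type*} [Field K] (x : K) : PowerSeries K :=
  PowerSeries.mk fun e => (x ^ (e + 1))⁻¹

theorem coeff_invSubSeries {K : Type*} [Field K] (x : K) (e : ℕ) :
    PowerSeries.coeff e (invSubSeries x) = (x ^ (e + 1))⁻¹ :=
  PowerSeries.coeff_mk _ _

theorem invSubSeries_mul_sub {K : Type*} [Field K] {x : K} (hx : x ≠ 0) :
    invSubSeries x * (PowerSeries.C x - PowerSeries.X) = 1 := by
  ext e
  rw [mul_sub, map_sub, PowerSeries.coeff_mul_C]
  cases e with
  | zero => simp [coeff_invSubSeries, hx]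
  | succ e =>
    rw [PowerSeries.coeff_succ_mul_X, coeff_invSubSeries, coeff_invSubSeries,
      PowerSeries.coeff_one, if_neg e.succ_ne_zero, pow_succ x (e + 1)]
    field_simp
    simp

theorem invSubSeries_sub_invSubSeries {K : Type*} [Field K] {x y : K} (hx : x ≠ 0) (hy : y ≠ 0) :
    invSubSeries x - invSubSeries y =
      PowerSeries.C (y - x) * (invSubSeries x * invSubSeries y) := by
  rw [map_sub]
  linear_combination (-invSubSeries x) * invSubSeries_mul_sub hy +
    invSubSeries y * invSubSeries_mul_sub hx

theorem map_invSubSeries {K L : Type*} [Field K] [Field L] (f : K →+* L) (x : K) :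
    PowerSeries.map f (invSubSeries x) = invSubSeries (f x) := by
  ext e
  simp [coeff_invSubSeries]

/-- `s + ∂` acts on the coefficients of `1 / (y - X)` times an `s`-invariant series `G`, when
`s` maps `y` to `x` and `∂` has denominator `y - x`. -/
theorem demazurePlusAux_coeff_invSubSeries_mul (𝕜 : Type*) [Field 𝕜] {K : Type*} [Field K]
    [Algebra 𝕜 K] (s : K ≃ₐ[𝕜] K) {x y : K} (hx : x ≠ 0) (hy : y ≠ 0) (hxy : y - x ≠ 0)
    (hs : s y = x) (G : PowerSeries K) (hG : PowerSeries.map (s : K →+* K) G = G) (m : ℕ) :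
    demazurePlusAux 𝕜 K s (y - x) (PowerSeries.coeff m (invSubSeries y * G)) =
      PowerSeries.coeff m (invSubSeries x * (G * (1 - invSubSeries y))) := by
  have hmap : PowerSeries.map (s : K →+* K) (invSubSeries y * G) = invSubSeries x * G := by
    rw [map_mul, hG, map_invSubSeries]
    simp [hs]
  have hcoeff : s (PowerSeries.coeff m (invSubSeries y * G)) =
      PowerSeries.coeff m (invSubSeries x * G) := by
    rw [← hmap, PowerSeries.coeff_map]
    rfl
  have hsub : invSubSeries y * G - invSubSeries x * G =
      PowerSeries.C (x - y) * (invSubSeries x * invSubSeries y * G) := by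
    linear_combination G * invSubSeries_sub_invSubSeries hy hx
  have hquot : (PowerSeries.coeff m (invSubSeries y * G) -
      PowerSeries.coeff m (invSubSeries x * G)) * (y - x)⁻¹ =
        -PowerSeries.coeff m (invSubSeries x * invSubSeries y * G) := by
    rw [← map_sub, hsub, PowerSeries.coeff_C_mul]
    field_simp
    ring
  simp only [demazurePlusAux, LinearMap.add_apply, LinearMap.comp_apply, LinearMap.sub_apply,
    LinearMap.id_apply, AlgEquiv.toLinearMap_apply, LinearMap.mulRight_apply, hcoeff, hquot]
  rw [← map_neg, ← map_add]
  congr 1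
  ring

/-- Telescoping expansion of `1 - ∏ (1 - yⱼ)`. -/
theorem sum_mul_prod_one_sub {R : Type*} [CommRing R] (n : ℕ) (y : ℕ → R) :
    y n + ∑ i ∈ Finset.range n, y i * ∏ j ∈ Finset.range (n - i), (1 - y (i + 1 + j)) =
      1 - ∏ j ∈ Finset.range (n + 1), (1 - y j) := by
  induction n generalizing y with
  | zero => simp
  | succ n ih =>
    have h := ih fun k => y (k + 1)
    rw [Finset.sum_range_succ', Finset.prod_range_succ' _ (n + 1)]
    simp only [Nat.add_sub_add_right, Nat.sub_zero, zero_add]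
    have hsum : ∀ i j : ℕ, i + 1 + 1 + j = i + 1 + j + 1 := fun i j => by omega
    simp only [hsum, add_comm 1]
    linear_combination h

section RationalFunctions

variable (𝕜 : Type*) [Field 𝕜] (r : ℕ) (K : Type*) [Field K]
  [Algebra (MvPolynomial (Fin r) 𝕜) K]

/-- The series `1 / (xᵢ - X)`, extended by zero to all natural indices. -/
def varSeries (i : ℕ) : PowerSeries K :=
  if h : i < r then invSubSeries (ratVar 𝕜 r K ⟨i, h⟩) else 0

theorem varSeries_of_lt {i : ℕ} (h : i < r) :
    varSeries 𝕜 r K i = invSubSeries (ratVar 𝕜 r K ⟨i, h⟩) :=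
  dif_pos h

variable [IsFractionRing (MvPolynomial (Fin r) 𝕜) K]

theorem ratVar_injective_s11 : Function.Injective (ratVar 𝕜 r K) := fun _ _ h =>
  X_injective (IsFractionRing.injective (MvPolynomial (Fin r) 𝕜) K h)

theorem ratVar_ne_zero (i : Fin r) : ratVar 𝕜 r K i ≠ 0 := by
  intro h
  refine X_ne_zero (R := 𝕜) i (IsFractionRing.injective (MvPolynomial (Fin r) 𝕜) K ?_)
  rw [map_zero]
  exact h

theorem DPlus_chain_coeff [Algebra 𝕜 K]
    (s : Equiv.Perm (Fin r) → (K ≃ₐ[𝕜] K))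
    (hs : ∀ (σ : Equiv.Perm (Fin r)) (i : Fin r), s σ (ratVar 𝕜 r K i) = ratVar 𝕜 r K (σ i))
    (m k i : ℕ) (hik : i + k < r) :
    ((List.range k).map fun t => DPlusTotal 𝕜 K s (i + t)).prod
        (PowerSeries.coeff m (varSeries 𝕜 r K (i + k))) =
      PowerSeries.coeff m (varSeries 𝕜 r K i *
        ∏ j ∈ Finset.range k, (1 - varSeries 𝕜 r K (i + 1 + j))) := by
  induction k generalizing i with
  | zero => simp
  | succ k ih =>
    have h := ih (i + 1) (by omega)
    have hi : i + 1 < r := by omega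
    have hshift : ((fun t => DPlusTotal 𝕜 K s (i + t)) ∘ Nat.succ) =
        fun t => DPlusTotal 𝕜 K s (i + 1 + t) := by
      funext t
      rw [Function.comp_apply, Nat.succ_eq_add_one, add_assoc, add_comm 1]
    rw [List.range_succ_eq_map, List.map_cons, List.map_map, hshift, List.prod_cons,
      Module.End.mul_apply, show i + (k + 1) = i + 1 + k by omega, h, Finset.prod_range_succ',
      add_zero, add_zero, DPlusTotal, dif_pos hi, DPlus, varSeries_of_lt 𝕜 r K hi,
      varSeries_of_lt 𝕜 r K (Nat.lt_of_succ_lt hi)]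
    have hprod : ∏ j ∈ Finset.range k, (1 - varSeries 𝕜 r K (i + 1 + (j + 1))) =
        ∏ j ∈ Finset.range k, (1 - varSeries 𝕜 r K (i + 1 + 1 + j)) :=
      Finset.prod_congr rfl fun j _ => by rw [add_assoc (i + 1) 1, add_comm 1]
    rw [hprod]
    refine demazurePlusAux_coeff_invSubSeries_mul 𝕜 _ (ratVar_ne_zero 𝕜 r K _)
      (ratVar_ne_zero 𝕜 r K _) ?_ ?_ _ ?_ m
    · rw [sub_ne_zero]
      intro heq
      simpa using ratVar_injective_s11 𝕜 r K heq
    · rw [hs, Equiv.swap_apply_right]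
    · rw [map_prod]
      refine Finset.prod_congr rfl fun j hj => ?_
      have hj' : i + 1 + 1 + j < r := by
        have := Finset.mem_range.mp hj
        omega
      rw [map_sub, map_one, varSeries_of_lt 𝕜 r K hj', map_invSubSeries]
      have hfix : (s (Equiv.swap ⟨i, Nat.lt_of_succ_lt hi⟩ ⟨i + 1, hi⟩) : K →+* K)
          (ratVar 𝕜 r K ⟨i + 1 + 1 + j, hj'⟩) = ratVar 𝕜 r K ⟨i + 1 + 1 + j, hj'⟩ := by
        rw [RingHom.coe_coe, hs, Equiv.swap_apply_of_ne_of_ne] <;>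
          simp only [ne_eq, Fin.mk.injEq] <;> omega
      rw [hfix]

end RationalFunctions

/-- A truncation of `1 - 1 / (x - X)`, with the two contributions to the constant term kept
apart: the index `0` contributes `1`, and the index `p > 0` contributes `-x⁻ᵖ Xᵖ⁻¹`. -/
theorem coeff_sum_monomial_eq_coeff_one_sub_invSubSeries {K : Type*} [Field K] (x : K)
    {e N : ℕ} (he : e < N) :
    PowerSeries.coeff e (∑ p : Fin (N + 1), PowerSeries.monomial ((p : ℕ) - 1)
      (if 0 < (p : ℕ) then -(x ^ (p : ℕ))⁻¹ else 1)) =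
      PowerSeries.coeff e (1 - invSubSeries x) := by
  rw [map_sum, Fin.sum_univ_succ, map_sub, coeff_invSubSeries, PowerSeries.coeff_one,
    sub_eq_add_neg]
  congr 1
  · simp
  · rw [Finset.sum_eq_single (⟨e, he⟩ : Fin N)]
    · simp
    · intro q _ hq
      rw [PowerSeries.coeff_monomial, if_neg]
      intro h
      exact hq (Fin.ext (by simpa using h.symm))
    · simp

theorem sum_pred_add_card {ι : Type*} [Fintype ι] (p : ι → ℕ) :
    ∑ i, (p i - 1) + Fintype.card ι = ∑ i, p i + (Finset.univ.filter fun i => p i = 0).card := by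
  rw [Finset.card_filter, Fintype.card_eq_sum_ones, ← Finset.sum_add_distrib,
    ← Finset.sum_add_distrib]
  refine Finset.sum_congr rfl fun i _ => ?_
  split_ifs <;> omega

theorem coeff_prod_one_sub_invSubSeries {K : Type*} [Field K] {r : ℕ} (hr : 1 ≤ r)
    (x : Fin r → K) (m : ℕ) :
    PowerSeries.coeff m (∏ i, (1 - invSubSeries (x i))) =
      ∑ p ∈ Finset.univ.filter (fun p : Fin r → Fin (m + r + 1) =>
          (∑ i, (p i : ℕ)) + (Finset.univ.filter fun i : Fin r => (p i : ℕ) = 0).card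
            = m + r),
        ∏ i ∈ Finset.univ.filter fun i : Fin r => 0 < (p i : ℕ), -(x i ^ (p i : ℕ))⁻¹ := by
  have htrunc : PowerSeries.coeff m (∏ i, (1 - invSubSeries (x i))) =
      PowerSeries.coeff m (∏ i, ∑ p : Fin (m + r + 1), PowerSeries.monomial ((p : ℕ) - 1)
        (if 0 < (p : ℕ) then -(x i ^ (p : ℕ))⁻¹ else 1)) := by
    rw [PowerSeries.coeff_prod, PowerSeries.coeff_prod]
    refine Finset.sum_congr rfl fun l hl => Finset.prod_congr rfl fun i _ => ?_
    refine (coeff_sum_monomial_eq_coeff_one_sub_invSubSeries (x i) ?_).symm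
    have hle : l i ≤ ∑ j, l j :=
      Finset.single_le_sum (f := fun j => l j) (fun _ _ => Nat.zero_le _) (Finset.mem_univ i)
    rw [(Finset.mem_finsuppAntidiag.mp hl).1] at hle
    omega
  rw [htrunc, Finset.prod_univ_sum, map_sum, Fintype.piFinset_univ, Finset.sum_filter]
  refine Finset.sum_congr rfl fun p _ => ?_
  rw [PowerSeries.prod_monomial, PowerSeries.coeff_monomial, Finset.prod_filter]
  have hcard := sum_pred_add_card fun i => (p i : ℕ)
  rw [Fintype.card_fin] at hcard
  refine if_congr ?_ rfl rfl
  omega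

/-- For `r ≥ 1`, `m ≥ 0`, in `K = 𝕜(x₁,…,x_r)`:
`x_r^{−m−1} + ∑_{i=1}^{r−1} (Dᵢ⁺ ∘ ⋯ ∘ D_{r−1}⁺)(x_r^{−m−1})
  = δ_{m,0} − ∑_{(p₁,…,p_r)} ∏_{i : pᵢ>0} (−xᵢ^{−pᵢ})`,
the sum being over tuples of nonnegative integers with
`p₁ + ⋯ + p_r + #{i : pᵢ = 0} = m + r` (every such tuple has all entries `≤ m + r`, so
they are faithfully enumerated by the filtered finite set below); everything here is
`0`-indexed, and the composite `Dᵢ⁺ ∘ ⋯ ∘ D_{r−1}⁺` is the `List.prod` (= composition)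
of the indicated operators. -/
theorem DPlus_chain_sum_on_inverse_power
    (𝕜 : Type*) [Field 𝕜] [CharZero 𝕜] (r m : ℕ) (hr : 1 ≤ r)
    (K : Type*) [Field K] [Algebra 𝕜 K] [Algebra (MvPolynomial (Fin r) 𝕜) K]
    [IsScalarTower 𝕜 (MvPolynomial (Fin r) 𝕜) K]
    [IsFractionRing (MvPolynomial (Fin r) 𝕜) K]
    (s : Equiv.Perm (Fin r) → (K ≃ₐ[𝕜] K))
    (hs : ∀ (σ : Equiv.Perm (Fin r)) (i : Fin r), s σ (ratVar 𝕜 r K i) = ratVar 𝕜 r K (σ i)) :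
    (ratVar 𝕜 r K ⟨r - 1, by omega⟩ ^ (m + 1))⁻¹ +
      ∑ i ∈ Finset.range (r - 1),
        (((List.range (r - 1 - i)).map fun t => DPlusTotal 𝕜 K s (i + t)).prod)
          ((ratVar 𝕜 r K ⟨r - 1, by omega⟩ ^ (m + 1))⁻¹) =
    (if m = 0 then (1 : K) else 0) -
      ∑ p ∈ Finset.univ.filter (fun p : Fin r → Fin (m + r + 1) =>
          (∑ i, (p i : ℕ)) + (Finset.univ.filter fun i : Fin r => (p i : ℕ) = 0).card
            = m + r),
        ∏ i ∈ Finset.univ.filter fun i : Fin r => 0 < (p i : ℕ),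
          -(ratVar 𝕜 r K i ^ (p i : ℕ))⁻¹ := by
  obtain ⟨n, rfl⟩ : ∃ n, r = n + 1 := ⟨r - 1, by omega⟩
  simp only [Nat.add_sub_cancel]
  have hlast : (ratVar 𝕜 (n + 1) K ⟨n, by omega⟩ ^ (m + 1))⁻¹ =
      PowerSeries.coeff m (varSeries 𝕜 (n + 1) K n) := by
    rw [varSeries_of_lt 𝕜 (n + 1) K n.lt_succ_self, coeff_invSubSeries]
  have hchain : ∀ i ∈ Finset.range n,
      ((List.range (n - i)).map fun t => DPlusTotal 𝕜 K s (i + t)).prod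
        (PowerSeries.coeff m (varSeries 𝕜 (n + 1) K n)) =
      PowerSeries.coeff m (varSeries 𝕜 (n + 1) K i *
        ∏ j ∈ Finset.range (n - i), (1 - varSeries 𝕜 (n + 1) K (i + 1 + j))) := by
    intro i hi
    have hin : i + (n - i) = n := by
      have := Finset.mem_range.mp hi
      omega
    have h := DPlus_chain_coeff 𝕜 (n + 1) K s hs m (n - i) i (by omega)
    rwa [hin] at h
  have hprod : ∏ j ∈ Finset.range (n + 1), (1 - varSeries 𝕜 (n + 1) K j) =
      ∏ i, (1 - invSubSeries (ratVar 𝕜 (n + 1) K i)) := by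
    rw [Finset.prod_range]
    exact Finset.prod_congr rfl fun i _ => by rw [varSeries_of_lt 𝕜 (n + 1) K i.isLt]
  rw [hlast, Finset.sum_congr rfl hchain, ← map_sum, ← map_add, sum_mul_prod_one_sub, hprod,
    map_sub, PowerSeries.coeff_one, coeff_prod_one_sub_invSubSeries hr]
end
end
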